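/- arXiv:2205.11953 — 6 statements merged into one kernel-verified Lean document; each statement's English description precedes it below -/
import Mathlib

section
/- Let q ≥ 1, let ᾱ₁,…,ᾱ_q ≥ 0 satisfy ᾱ₁+⋯+ᾱ_q < 1, and let Λ̄ be the q×q companion matrix with first row (ᾱ₁,…,ᾱ_q), ones on the subdiagonal and zeros elsewhere. Then I_q − Λ̄ is invertible with (I_q−Λ̄)^{−1} = Σ_{i=0}^∞ Λ̄^i, a matrix with nonnegative entries, and the map ‖x‖_• := 1_q'(I_q−Λ̄)^{−1}(x)^{abs} is a monotone vector norm on ℝ^q satisfying, for every x ∈ ℝ^q, ‖x‖_• = ‖x‖₁ + 1_q'(I_q−Λ̄)^{−1}Λ̄(x)^{abs}; in particular ‖x‖_• ≥ ‖x‖₁. -/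
/-- A vector norm on ℝ^q is monotone if |x_i| ≤ |y_i| for all i implies ‖x‖ ≤ ‖y‖. -/
def IsMonotoneNorm {d : ℕ} (N : (Fin d → ℝ) → ℝ) : Prop :=
  ∀ x y : Fin d → ℝ, (∀ i, |x i| ≤ |y i|) → N x ≤ N y

/-- A vector norm on ℝ^d, given as a function satisfying the norm axioms. -/
def IsVectorNorm {d : ℕ} (N : (Fin d → ℝ) → ℝ) : Prop :=
  (∀ x, 0 ≤ N x) ∧ (∀ x, N x = 0 ↔ x = 0) ∧
  (∀ (c : ℝ) (x : Fin d → ℝ), N (c • x) = |c| * N x) ∧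
  (∀ x y : Fin d → ℝ, N (x + y) ≤ N x + N y)

/-- The q×q companion matrix with first row (ᾱ₁,…,ᾱ_q), ones on the subdiagonal. -/
def companionMat (q : ℕ) (a : ℕ → ℝ) : Matrix (Fin q) (Fin q) ℝ :=
  Matrix.of fun i j =>
    if (i : ℕ) = 0 then a ((j : ℕ) + 1)
    else if (i : ℕ) = (j : ℕ) + 1 then 1 else 0

open Matrix in
theorem aux_nonneg {q : ℕ} (A : Matrix (Fin q) (Fin q) ℝ) (hA : ∀ i j, 0 ≤ A i j) (n : ℕ) :
    ∀ i j, 0 ≤ (A ^ n) i j := by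
  induction n with
  | zero =>
    intro i j
    rw [pow_zero, Matrix.one_apply]
    split_ifs <;> norm_num
  | succ n ih =>
    intro i j
    rw [pow_succ, Matrix.mul_apply]
    exact Finset.sum_nonneg fun k _ => mul_nonneg (ih i k) (hA k j)

open Matrix in
theorem aux_summable {q : ℕ} (A : Matrix (Fin q) (Fin q) ℝ) (hA : ∀ i j, 0 ≤ A i j)
    (v : Fin q → ℝ) (hv : ∀ i, 0 ≤ v i) (h : ∀ i, 1 + ∑ j, A i j * v j ≤ v i) :
    Summable (fun n : ℕ => A ^ n) := by
  have hn := aux_nonneg A hA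
  have key : ∀ n k, ∑ i ∈ Finset.range n, ∑ j, (A ^ i) k j + ∑ j, (A ^ n) k j * v j ≤ v k := by
    intro n k
    induction n with
    | zero => simp [Matrix.one_apply]
    | succ n ih =>
      refine le_trans ?_ ih
      rw [Finset.sum_range_succ, add_assoc]
      gcongr
      have e : ∑ j, (A ^ (n+1)) k j * v j = ∑ j, (A ^ n) k j * ∑ l, A j l * v l := by
        have := congrFun (Matrix.mulVec_mulVec v (A ^ n) A) k
        rw [← pow_succ] at this
        exact this.symm
      rw [e, ← Finset.sum_add_distrib]
      refine Finset.sum_le_sum fun j _ => ?_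
      have := mul_le_mul_of_nonneg_left (h j) (hn n k j)
      linarith
  refine Pi.summable.2 fun k => Pi.summable.2 fun l => ?_
  refine summable_of_sum_range_le (c := v k) (fun n => hn n k l) fun n => ?_
  refine le_trans ?_ (key n k)
  have h1 : ∑ i ∈ Finset.range n, (A ^ i) k l ≤ ∑ i ∈ Finset.range n, ∑ j, (A ^ i) k j :=
    Finset.sum_le_sum fun i _ =>
      Finset.single_le_sum (f := fun j => (A ^ i) k j) (fun j _ => hn i k j) (Finset.mem_univ l)
  have h2 : 0 ≤ ∑ j, (A ^ n) k j * v j :=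
    Finset.sum_nonneg fun j _ => mul_nonneg (hn n k j) (hv j)
  linarith

theorem comp_nonneg (q : ℕ) (a : ℕ → ℝ) (ha : ∀ i, 1 ≤ i → i ≤ q → 0 ≤ a i) :
    ∀ i j, 0 ≤ companionMat q a i j := by
  intro i j
  simp only [companionMat, Matrix.of_apply]
  split_ifs
  · exact ha _ (by omega) (by omega)
  · norm_num
  · norm_num

theorem comp_summable (q : ℕ) (a : ℕ → ℝ) (ha : ∀ i, 1 ≤ i → i ≤ q → 0 ≤ a i)
    (hsum : (∑ i ∈ Finset.Icc 1 q, a i) < 1) :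
    Summable (fun n : ℕ => companionMat q a ^ n) := by
  have hs : ∑ i ∈ Finset.Icc 1 q, a i = ∑ j : Fin q, a ((j : ℕ) + 1) := by
    rw [Fin.sum_univ_eq_sum_range (fun j => a (j + 1)) q, Finset.range_eq_Ico,
      Finset.sum_Ico_add' a 0 q 1]
    rfl
  have hs0 : 0 ≤ ∑ i ∈ Finset.Icc 1 q, a i := Finset.sum_nonneg fun i hi => by
    rw [Finset.mem_Icc] at hi
    exact ha i hi.1 hi.2
  set s := ∑ i ∈ Finset.Icc 1 q, a i with hsdef
  obtain ⟨C, hC0, hC⟩ : ∃ C : ℝ, 0 ≤ C ∧ 1 + s * (C + q) = C := by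
    have h1 : 0 < 1 - s := by linarith
    refine ⟨(1 + s * q) / (1 - s), by positivity, ?_⟩
    field_simp
    ring
  refine aux_summable _ (comp_nonneg q a ha) (fun i => C + (i : ℕ)) (fun i => by positivity) ?_
  intro i
  by_cases hi : (i : ℕ) = 0
  · simp only [companionMat, Matrix.of_apply, hi, if_true]
    have : ∑ j : Fin q, a ((j : ℕ) + 1) * (C + (j : ℕ)) ≤ s * (C + q) := by
      rw [hs, Finset.sum_mul]
      refine Finset.sum_le_sum fun j _ => ?_
      refine mul_le_mul_of_nonneg_left ?_ (ha _ (by omega) (by omega))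
      have : ((j : ℕ) : ℝ) ≤ q := by exact_mod_cast j.2.le
      linarith
    simp only [Nat.cast_zero]
    linarith
  · simp only [companionMat, Matrix.of_apply, hi, if_false]
    have hlt : (i : ℕ) - 1 < q := by omega
    rw [Finset.sum_eq_single (⟨(i : ℕ) - 1, hlt⟩ : Fin q)]
    · have : (i : ℕ) = (i : ℕ) - 1 + 1 := by omega
      have h2 : (((i : ℕ) : ℕ) : ℝ) = (((i : ℕ) - 1 : ℕ) : ℝ) + 1 := by exact_mod_cast this
      simp only [← this, if_true]
      linarith
    · intro j _ hj
      rw [if_neg, zero_mul]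
      intro h
      apply hj
      ext
      simp only
      omega
    · simp

/-- for ᾱ_i ≥ 0 with Σᾱ_i < 1 and Λ̄ the companion matrix, I−Λ̄ is
invertible with (I−Λ̄)^{−1} = Σ Λ̄^i entrywise nonnegative, and
‖x‖_• = 1'(I−Λ̄)^{−1}(x)^{abs} is a monotone vector norm with
‖x‖_• = ‖x‖₁ + 1'(I−Λ̄)^{−1}Λ̄(x)^{abs} ≥ ‖x‖₁. -/
theorem stmt_6 (q : ℕ) (hq : 1 ≤ q) (a : ℕ → ℝ)
    (ha : ∀ i, 1 ≤ i → i ≤ q → 0 ≤ a i)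
    (hsum : (∑ i ∈ Finset.Icc 1 q, a i) < 1) :
    IsUnit (1 - companionMat q a) ∧
    HasSum (fun i : ℕ => (companionMat q a) ^ i) (1 - companionMat q a)⁻¹ ∧
    (∀ i j, 0 ≤ (1 - companionMat q a)⁻¹ i j) ∧
    (IsVectorNorm (fun x : Fin q → ℝ =>
        ∑ i, ((1 - companionMat q a)⁻¹.mulVec fun j => |x j|) i) ∧
      IsMonotoneNorm (fun x : Fin q → ℝ =>
        ∑ i, ((1 - companionMat q a)⁻¹.mulVec fun j => |x j|) i)) ∧
    (∀ x : Fin q → ℝ,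
      (∑ i, ((1 - companionMat q a)⁻¹.mulVec fun j => |x j|) i)
        = (∑ i, |x i|) +
          ∑ i, (((1 - companionMat q a)⁻¹ * companionMat q a).mulVec fun j => |x j|) i) ∧
    (∀ x : Fin q → ℝ,
      (∑ i, |x i|) ≤ ∑ i, ((1 - companionMat q a)⁻¹.mulVec fun j => |x j|) i) := by
  have hA := comp_nonneg q a ha
  have hS := comp_summable q a ha hsum
  set A := companionMat q a with hAdef
  have hl : (∑' n : ℕ, A ^ n) * (1 - A) = 1 := hS.tsum_pow_mul_one_sub
  have hr : (1 - A) * (∑' n : ℕ, A ^ n) = 1 := hS.one_sub_mul_tsum_pow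
  have hinv : (1 - A)⁻¹ = ∑' n : ℕ, A ^ n := Matrix.inv_eq_left_inv hl
  have hHS : HasSum (fun i : ℕ => A ^ i) (1 - A)⁻¹ := hinv ▸ hS.hasSum
  have hB : ∀ i j, 0 ≤ (1 - A)⁻¹ i j := fun i j =>
    (Pi.hasSum.1 (Pi.hasSum.1 hHS i) j).nonneg fun n => aux_nonneg A hA n i j
  have hBA : (1 - A)⁻¹ = 1 + (1 - A)⁻¹ * A := by
    rw [← hinv, mul_sub, mul_one] at hl
    exact sub_eq_iff_eq_add.1 hl
  have hu : IsUnit (1 - A) := ⟨⟨1 - A, _, hr, hl⟩, rfl⟩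
  clear_value A
  generalize (1 - A)⁻¹ = B at *
  have heq : ∀ x : Fin q → ℝ, (∑ i, (B.mulVec fun j => |x j|) i)
        = (∑ i, |x i|) + ∑ i, ((B * A).mulVec fun j => |x j|) i := by
    intro x
    conv_lhs => rw [hBA, Matrix.add_mulVec, Matrix.one_mulVec]
    simp only [Pi.add_apply, Finset.sum_add_distrib]
  have hge : ∀ x : Fin q → ℝ, (∑ i, |x i|) ≤ ∑ i, (B.mulVec fun j => |x j|) i := by
    intro x
    rw [heq x]
    refine le_add_of_nonneg_right (Finset.sum_nonneg fun i _ => ?_)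
    simp only [Matrix.mulVec, dotProduct]
    refine Finset.sum_nonneg fun j _ => mul_nonneg ?_ (abs_nonneg _)
    rw [Matrix.mul_apply]
    exact Finset.sum_nonneg fun k _ => mul_nonneg (hB _ _) (hA _ _)
  refine ⟨hu, hHS, hB, ⟨⟨?_, ?_, ?_, ?_⟩, ?_⟩, heq, hge⟩
  · intro x
    exact (Finset.sum_nonneg fun i _ => abs_nonneg (x i)).trans (hge x)
  · intro x
    constructor
    · intro h
      have h1 := hge x
      simp only at h
      rw [h] at h1
      funext i
      have h2 := Finset.single_le_sum (f := fun i => |x i|) (fun j _ => abs_nonneg (x j))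
        (Finset.mem_univ i)
      exact abs_nonpos_iff.1 (h2.trans h1)
    · rintro rfl
      simp [Matrix.mulVec, dotProduct]
  · intro c x
    simp only [Matrix.mulVec, dotProduct, Pi.smul_apply, smul_eq_mul, abs_mul, Finset.mul_sum]
    refine Finset.sum_congr rfl fun i _ => Finset.sum_congr rfl fun j _ => by ring
  · intro x y
    simp only [Matrix.mulVec, dotProduct, Pi.add_apply, ← Finset.sum_add_distrib, ← mul_add]
    exact Finset.sum_le_sum fun i _ => Finset.sum_le_sum fun j _ =>
      mul_le_mul_of_nonneg_left (abs_add_le _ _) (hB i j)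
  · intro x y h
    simp only [Matrix.mulVec, dotProduct]
    exact Finset.sum_le_sum fun i _ => Finset.sum_le_sum fun j _ =>
      mul_le_mul_of_nonneg_left (h j) (hB i j)
end

section
/- Let a ≥ 2 and let ε be a real random variable with E[ε] = 0, E[ε²] = 1 and μ_a := E[|ε|^a] < ∞. Then there exist positive constants A and B, depending only on a, such that for every m ∈ ℝ with m ≠ 0 and every σ ≥ 0, E[|m + σε|^a] ≤ |m|^a + A|m|^{a−2}σ² + Bσ^a μ_a. -/
open MeasureTheory

theorem fs_ineq (a : ℝ) (ha : 2 ≤ a) (u : ℝ) :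
    |1 + u| ^ a ≤ 1 + a * u + (2 * a ^ 2) * u ^ 2 + (2 * a + 1) ^ a * |u| ^ a := by
  by_cases h : 2 * a * |u| ≤ 1
  · have hpos : 0 ≤ (2 * a + 1) ^ a * |u| ^ a := by positivity
    have h1 : 2 * a * u ≤ 1 := by nlinarith [le_abs_self u]
    have h2 : -1 ≤ 2 * a * u := by nlinarith [neg_abs_le u]
    have h3 : u ≤ 1 / 4 := by nlinarith [le_abs_self u, abs_nonneg u]
    have h4 : -(1 / 4) ≤ u := by nlinarith [neg_abs_le u, abs_nonneg u]
    have hu : 0 < 1 + u := by linarith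
    have hd : 1 / 2 ≤ 1 - (a - 1) * u := by nlinarith
    have hb := one_add_mul_self_le_rpow_one_add (s := -(u / (1 + u)))
      (by rw [neg_le_neg_iff, div_le_one hu]; linarith) (p := a) (by linarith)
    have e1 : 1 + -(u / (1 + u)) = (1 + u)⁻¹ := by field_simp; ring
    have e2 : 1 + a * -(u / (1 + u)) = (1 - (a - 1) * u) / (1 + u) := by field_simp; ring
    rw [e1, e2, Real.inv_rpow hu.le, div_le_iff₀ hu] at hb
    rw [abs_of_pos hu]
    have hX : 0 < (1 + u) ^ a := Real.rpow_pos_of_pos hu a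
    have hc : (1 + u) ^ a * (1 - (a - 1) * u) ≤ 1 + u := by
      have := mul_le_mul_of_nonneg_left hb hX.le
      rwa [← mul_assoc, mul_inv_cancel₀ hX.ne', one_mul] at this
    have hk : 1 + u ≤ (1 + a * u + (2 * a ^ 2) * u ^ 2) * (1 - (a - 1) * u) := by
      have hh : a ^ 2 * u ^ 2 ≤ 2 * a ^ 2 * u ^ 2 * (1 - (a - 1) * u) := by
        nlinarith [mul_nonneg (sq_nonneg a) (sq_nonneg u)]
      nlinarith [mul_nonneg (by linarith : 0 ≤ a) (sq_nonneg u)]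
    have := le_of_mul_le_mul_right (hc.trans hk) (by linarith)
    linarith
  · push Not at h
    have h1 : |1 + u| ≤ (2 * a + 1) * |u| := by
      have := abs_add_le 1 u
      rw [abs_one] at this
      linarith
    have h2 : |1 + u| ^ a ≤ (2 * a + 1) ^ a * |u| ^ a := by
      rw [← Real.mul_rpow (by linarith) (abs_nonneg u)]
      exact Real.rpow_le_rpow (abs_nonneg _) h1 (by linarith)
    have h3 : a * |u| ≤ 2 * a ^ 2 * u ^ 2 := by
      rw [← sq_abs u]
      nlinarith [mul_nonneg (by linarith : 0 ≤ a) (abs_nonneg u)]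
    nlinarith [neg_abs_le u]

theorem stmt_8 (a : ℝ) (ha : 2 ≤ a) :
    ∃ A B : ℝ, 0 < A ∧ 0 < B ∧
      ∀ (με : Measure ℝ), IsProbabilityMeasure με →
        (∫ x, x ∂με) = 0 → (∫ x, x ^ 2 ∂με) = 1 →
        Integrable (fun x => |x| ^ a) με →
        ∀ (m σ : ℝ), m ≠ 0 → 0 ≤ σ →
          (∫ x, |m + σ * x| ^ a ∂με)
            ≤ |m| ^ a + A * |m| ^ (a - 2) * σ ^ 2
              + B * σ ^ a * ∫ x, |x| ^ a ∂με := by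
  refine ⟨2 * a ^ 2, (2 * a + 1) ^ a, by positivity, by positivity, ?_⟩
  intro με _ h0 h1 hI m σ hm hσ
  have i2 : Integrable (fun x : ℝ => x ^ 2) με := by
    by_contra hn
    rw [integral_undef hn] at h1
    norm_num at h1
  have i1 : Integrable (fun x : ℝ => x) με := by
    refine ((integrable_const (1 : ℝ)).add i2).mono' measurable_id.aestronglyMeasurable ?_
    refine Filter.Eventually.of_forall fun x => ?_
    simp only [Real.norm_eq_abs, Pi.add_apply]
    rw [← sq_abs x]
    nlinarith [sq_nonneg (|x| - 1), abs_nonneg x]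
  have hm' : 0 < |m| := abs_pos.mpr hm
  set K := (2 * a + 1) ^ a with hK
  have key : ∀ x : ℝ, |m + σ * x| ^ a ≤ |m| ^ a + (|m| ^ a * (a * (σ / m))) * x
      + (2 * a ^ 2 * |m| ^ (a - 2) * σ ^ 2) * x ^ 2 + (K * σ ^ a) * |x| ^ a := by
    intro x
    have hf := mul_le_mul_of_nonneg_left (fs_ineq a ha (σ * x / m))
      (Real.rpow_nonneg hm'.le a)
    rw [← Real.mul_rpow hm'.le (abs_nonneg _), ← abs_mul,
      show m * (1 + σ * x / m) = m + σ * x by field_simp] at hf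
    refine hf.trans (le_of_eq ?_)
    have e1 : |m| ^ (a - 2) = |m| ^ a / m ^ 2 := by
      rw [Real.rpow_sub hm', Real.rpow_two, sq_abs]
    have e2 : |σ * x / m| ^ a = σ ^ a * |x| ^ a / |m| ^ a := by
      rw [abs_div, abs_mul, abs_of_nonneg hσ, Real.div_rpow (by positivity) hm'.le,
        Real.mul_rpow hσ (abs_nonneg _)]
    have hp : |m| ^ a ≠ 0 := (Real.rpow_pos_of_pos hm' a).ne'
    rw [e1, e2, ← hK]
    generalize |m| ^ a = M at *
    field_simp
  have j1 := (integrable_const (μ := με) (|m| ^ a)).add (i1.const_mul (|m| ^ a * (a * (σ / m))))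
  have j2 := j1.add (i2.const_mul (2 * a ^ 2 * |m| ^ (a - 2) * σ ^ 2))
  have j3 := j2.add (hI.const_mul (K * σ ^ a))
  have hint := integral_mono_of_nonneg (μ := με)
    (Filter.Eventually.of_forall fun x => Real.rpow_nonneg (abs_nonneg (m + σ * x)) a) j3
    (Filter.Eventually.of_forall key)
  refine hint.trans (le_of_eq ?_)
  rw [integral_add' j2 (hI.const_mul _), integral_add' j1 (i2.const_mul _),
    integral_add' (integrable_const _) (i1.const_mul _)]
  have z : ∫ x, (|m| ^ a * (a * (σ / m))) * x ∂με = 0 := by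
    rw [integral_const_mul (|m| ^ a * (a * (σ / m))) (fun x : ℝ => x), h0, mul_zero]
  rw [z]
  simp only [integral_const_mul, h1]
  simp
end

section
/- Let s₀ ≥ 1, ρ ∈ (0,2), α = 1 − ρ/(2s₀), and let b ≥ 1 satisfy b = 1 when s₀ = 1 and b > (2s₀−ρ)/(s₀(2−ρ)) when s₀ > 1. Let ε be a real random variable with E[ε] = 0, E[ε²] = 1 and E[|ε|^{2s₀}] < ∞. Let g : ℝ → ℝ be measurable and satisfy: there exist constants r, M₀, K₀ > 0 such that |g(u)| ≤ (1−r|u|^{−ρ})|u| for |u| ≥ M₀ and |g(u)| ≤ K₀ for |u| ≤ M₀. Fix C₀ > 0. Then there exist constants r̃ > 0 and C < ∞ such that for all z ∈ ℝ, all w ≥ 0 and all σ ≥ 0 with σ² ≤ C₀(1+w), E[|g(z) + σε|^{2s₀}] ≤ |z|^{2s₀} − r̃|z|^{2s₀α} + C w^{b s₀} + C. -/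
open MeasureTheory

lemma aux_tangent (q x : ℝ) (hq : 1 ≤ q) (hx : 0 < x) :
    x ^ q ≤ 1 + q * (x - 1) * x ^ (q - 1) := by
  have h := one_add_mul_self_le_rpow_one_add (s := x⁻¹ - 1) (by have := inv_pos.mpr hx; linarith) hq
  have e : 1 + (x⁻¹ - 1) = x⁻¹ := by ring
  rw [e, Real.inv_rpow hx.le] at h
  have hp : 0 < x ^ q := Real.rpow_pos_of_pos hx q
  have h2 := mul_le_mul_of_nonneg_right h hp.le
  rw [inv_mul_cancel₀ hp.ne'] at h2
  have h3 : x ^ q = x ^ (q - 1) * x := by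
    rw [← Real.rpow_add_one hx.ne']; congr 1; ring
  have h4 : (1 + q * (x⁻¹ - 1)) * x ^ q = x ^ q + q * (1 - x) * x ^ (q - 1) := by
    rw [h3]; field_simp
  rw [h4] at h2
  linarith

lemma aux_unit (p : ℝ) (hp : 2 ≤ p) (t : ℝ) :
    |1 + t| ^ p ≤ 1 + p * t + (p + 2 ^ p + p * (p - 1) * 2 ^ (p - 1)) * (t ^ 2 + |t| ^ p) := by
  have A : (0:ℝ) < 2 ^ p := by positivity
  have B : (0:ℝ) < 2 ^ (p - 1) := by positivity
  have B1 : (1:ℝ) ≤ 2 ^ (p - 1) := Real.one_le_rpow (by norm_num) (by linarith)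
  have T : 0 ≤ |t| ^ p := by positivity
  have D : 0 ≤ p * (p - 1) * 2 ^ (p - 1) := by
    have : 0 ≤ p - 1 := by linarith
    positivity
  rcases le_or_gt 1 |t| with h | h
  · have h1 : |1 + t| ^ p ≤ (2 * |t|) ^ p := by
      apply Real.rpow_le_rpow (abs_nonneg _) _ (by linarith)
      have := abs_add_le 1 t
      rw [abs_one] at this; linarith
    rw [Real.mul_rpow (by norm_num) (abs_nonneg _)] at h1
    have h2 : -t ≤ t ^ 2 := by
      rw [← sq_abs]; have := neg_abs_le t; nlinarith
    have h3 : p * (-t) ≤ p * t ^ 2 := mul_le_mul_of_nonneg_left h2 (by linarith)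
    have h4 : 0 ≤ p * |t| ^ p := by positivity
    have h5 : 0 ≤ 2 ^ p * t ^ 2 := by positivity
    have h6 : 0 ≤ (p * (p - 1) * 2 ^ (p - 1)) * (t ^ 2 + |t| ^ p) := by positivity
    linarith
  · obtain ⟨ha, hb⟩ := abs_lt.mp h
    have hx : 0 < 1 + t := by linarith
    rw [abs_of_pos hx]
    have h1 := aux_tangent p (1 + t) (by linarith) hx
    have h2 : t * ((1 + t) ^ (p - 1) - 1) ≤ (p - 1) * 2 ^ (p - 1) * t ^ 2 := by
      rcases le_or_gt 0 t with h0 | h0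
      · have h3 := aux_tangent (p - 1) (1 + t) (by linarith) hx
        have h4 : (1 + t) ^ (p - 1 - 1) ≤ 2 ^ (p - 1) :=
          (Real.rpow_le_rpow_of_exponent_le (by linarith) (by linarith)).trans
            (Real.rpow_le_rpow hx.le (by linarith) (by linarith))
        have h5 : (p - 1) * t * (1 + t) ^ (p - 1 - 1) ≤ (p - 1) * t * 2 ^ (p - 1) :=
          mul_le_mul_of_nonneg_left h4 (mul_nonneg (by linarith) h0)
        have h6 : (1 + t) ^ (p - 1) - 1 ≤ (p - 1) * t * 2 ^ (p - 1) := by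
          have : (1 + t - 1) = t := by ring
          rw [this] at h3; linarith
        have := mul_le_mul_of_nonneg_left h6 h0
        linarith
      · have h3 := one_add_mul_self_le_rpow_one_add (s := t) (by linarith)
          (show 1 ≤ p - 1 by linarith)
        have h4 : t * ((1 + t) ^ (p - 1) - 1) ≤ t * ((p - 1) * t) :=
          mul_le_mul_of_nonpos_left (by linarith) h0.le
        have h5 : (p - 1) * t ^ 2 * 1 ≤ (p - 1) * t ^ 2 * 2 ^ (p - 1) :=
          mul_le_mul_of_nonneg_left B1 (mul_nonneg (by linarith) (sq_nonneg t))
        linarith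
    have h3 := mul_le_mul_of_nonneg_left h2 (show 0 ≤ p by linarith)
    have h4 : 0 ≤ (p + 2 ^ p) * (t ^ 2 + |t| ^ p) := by positivity
    have h5 : 0 ≤ (p * (p - 1) * 2 ^ (p - 1)) * |t| ^ p := by positivity
    have e : (1 + t - 1) = t := by ring
    rw [e] at h1
    linarith

lemma aux_point (p : ℝ) (hp : 2 ≤ p) : ∃ K : ℝ, 0 < K ∧ ∀ a h : ℝ,
    |a + h| ^ p ≤ |a| ^ p + p * (|a| ^ p / a) * h + K * (|a| ^ (p - 2) * h ^ 2 + |h| ^ p) := by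
  have A : (0:ℝ) < 2 ^ p := by positivity
  have A1 : (1:ℝ) ≤ 2 ^ p := Real.one_le_rpow (by norm_num) (by linarith)
  have D : 0 ≤ p * (p - 1) * 2 ^ (p - 1) := by
    have : 0 ≤ p - 1 := by linarith
    positivity
  refine ⟨p + 2 ^ p + p * (p - 1) * 2 ^ (p - 1), by positivity, fun a h => ?_⟩
  have hK : 1 ≤ p + 2 ^ p + p * (p - 1) * 2 ^ (p - 1) := by linarith
  generalize hKe : p + 2 ^ p + p * (p - 1) * 2 ^ (p - 1) = K at hK
  rcases eq_or_ne a 0 with rfl | ha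
  · have h1 : 0 ≤ K * (|(0:ℝ)| ^ (p - 2) * h ^ 2) := by positivity
    have h2 : 0 ≤ (K - 1) * |h| ^ p := mul_nonneg (by linarith) (by positivity)
    have h3 : |(0:ℝ)| ^ p = 0 := by rw [abs_zero, Real.zero_rpow (by linarith)]
    rw [h3, zero_add]
    simp only [div_zero, mul_zero, zero_mul, zero_add, add_zero]
    linarith
  · have h1 := aux_unit p hp (h / a)
    rw [hKe] at h1
    have hpos : 0 < |a| := abs_pos.mpr ha
    have h2 := mul_le_mul_of_nonneg_left h1 (show 0 ≤ |a| ^ p by positivity)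
    have e1 : |a| ^ p * |1 + h / a| ^ p = |a + h| ^ p := by
      rw [← Real.mul_rpow (abs_nonneg _) (abs_nonneg _), ← abs_mul]
      congr 2; field_simp
    have e2 : |a| ^ p * |h / a| ^ p = |h| ^ p := by
      rw [← Real.mul_rpow (abs_nonneg _) (abs_nonneg _), ← abs_mul]
      congr 2; field_simp
    have e3 : |a| ^ p * (h / a) ^ 2 = |a| ^ (p - 2) * h ^ 2 := by
      have : |a| ^ p = |a| ^ (p - 2) * a ^ 2 := by
        rw [← sq_abs a, ← Real.rpow_two, ← Real.rpow_add hpos]; congr 1; ring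
      rw [this]; field_simp
    rw [e1] at h2
    calc _ ≤ _ := h2
      _ = |a| ^ p + p * (|a| ^ p / a) * h + K * (|a| ^ p * (h / a) ^ 2 + |a| ^ p * |h / a| ^ p) := by
        ring
      _ = _ := by rw [e2, e3]

lemma aux_int (p : ℝ) (hp : 2 ≤ p) (με : Measure ℝ) (hprob : IsProbabilityMeasure με)
    (hmean : (∫ e, e ∂με) = 0) (hvar : (∫ e, e ^ 2 ∂με) = 1)
    (hmom : Integrable (fun e => |e| ^ p) με) :
    ∃ K : ℝ, 0 < K ∧ ∀ a s : ℝ, 0 ≤ s →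
      (∫ e, |a + s * e| ^ p ∂με) ≤ |a| ^ p + K * (|a| ^ (p - 2) * s ^ 2 + s ^ p) := by
  obtain ⟨K, hK, hpt⟩ := aux_point p hp
  have i2 : Integrable (fun e : ℝ => e ^ 2) με := by
    by_contra h
    rw [integral_undef h] at hvar
    norm_num at hvar
  have i1 : Integrable (fun e : ℝ => e) με := by
    refine Integrable.mono' (i2.add (integrable_const (1:ℝ))) measurable_id.aestronglyMeasurable
      (Filter.Eventually.of_forall fun e => ?_)
    simp only [Pi.add_apply, Real.norm_eq_abs]
    rw [← sq_abs]; nlinarith [sq_nonneg (|e| - 1), abs_nonneg e]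
  set m := ∫ e, |e| ^ p ∂με with hm
  have hm0 : 0 ≤ m := integral_nonneg fun e => by positivity
  refine ⟨K * (1 + m), by positivity, fun a s hs => ?_⟩
  have j1 : Integrable (fun e : ℝ => p * (|a| ^ p / a) * s * e) με := i1.const_mul _
  have j2 : Integrable (fun e : ℝ => K * |a| ^ (p - 2) * s ^ 2 * e ^ 2) με := i2.const_mul _
  have j3 : Integrable (fun e : ℝ => K * s ^ p * |e| ^ p) με := hmom.const_mul _
  have j0 : Integrable (fun _ : ℝ => |a| ^ p) με := integrable_const _
  have h1 : (∫ e, |a + s * e| ^ p ∂με) ≤ ∫ e, (|a| ^ p + p * (|a| ^ p / a) * s * e +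
      K * |a| ^ (p - 2) * s ^ 2 * e ^ 2 + K * s ^ p * |e| ^ p) ∂με := by
    refine integral_mono_of_nonneg (Filter.Eventually.of_forall fun e => ?_)
      (((j0.add j1).add j2).add j3) (Filter.Eventually.of_forall fun e => ?_)
    · simp only [Pi.zero_apply]; positivity
    · have := hpt a (s * e)
      rw [abs_mul, abs_of_nonneg hs, Real.mul_rpow hs (abs_nonneg _)] at this
      simp only
      linarith
  have h2 : ∫ e, (|a| ^ p + p * (|a| ^ p / a) * s * e +
      K * |a| ^ (p - 2) * s ^ 2 * e ^ 2 + K * s ^ p * |e| ^ p) ∂με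
      = |a| ^ p + K * |a| ^ (p - 2) * s ^ 2 + K * s ^ p * m := by
    have k1 : Integrable (fun e : ℝ => |a| ^ p + p * (|a| ^ p / a) * s * e) με := j0.add j1
    have k2 : Integrable (fun e : ℝ => |a| ^ p + p * (|a| ^ p / a) * s * e +
      K * |a| ^ (p - 2) * s ^ 2 * e ^ 2) με := k1.add j2
    rw [integral_add k2 j3, integral_add k1 j2, integral_add j0 j1,
      integral_const_mul, integral_const_mul, integral_const_mul, hmean, hvar, ← hm]
    simp
  rw [h2] at h1
  have h3 : 0 ≤ K * m * (|a| ^ (p - 2) * s ^ 2) := by positivity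
  have h4 : 0 ≤ K * s ^ p := by positivity
  linarith

/-- drift bound for the conditional-mean component V₁.  Under the stated
conditions on s₀, ρ, α = 1−ρ/(2s₀), b, on the error distribution, and on g, for any
C₀ > 0 there exist r̃ > 0 and C < ∞ such that for all z ∈ ℝ, w ≥ 0 and σ ≥ 0 with
σ² ≤ C₀(1+w): E[|g(z)+σε|^{2s₀}] ≤ |z|^{2s₀} − r̃|z|^{2s₀α} + C w^{bs₀} + C. -/
theorem stmt_9 (s₀ ρ b : ℝ) (hs₀ : 1 ≤ s₀) (hρ0 : 0 < ρ) (hρ2 : ρ < 2)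
    (hb : 1 ≤ b) (hb1 : s₀ = 1 → b = 1)
    (hb2 : 1 < s₀ → (2 * s₀ - ρ) / (s₀ * (2 - ρ)) < b)
    (με : Measure ℝ) (hprob : IsProbabilityMeasure με)
    (hmean : (∫ e, e ∂με) = 0) (hvar : (∫ e, e ^ 2 ∂με) = 1)
    (hmom : Integrable (fun e => |e| ^ (2 * s₀)) με)
    (g : ℝ → ℝ) (hgmeas : Measurable g)
    (r M₀ K₀ : ℝ) (hr : 0 < r) (hM₀ : 0 < M₀) (hK₀ : 0 < K₀)
    (hg1 : ∀ u : ℝ, M₀ ≤ |u| → |g u| ≤ (1 - r * |u| ^ (-ρ)) * |u|)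
    (hg2 : ∀ u : ℝ, |u| ≤ M₀ → |g u| ≤ K₀)
    (C₀ : ℝ) (hC₀ : 0 < C₀) :
    ∃ rt : ℝ, 0 < rt ∧ ∃ C : ℝ,
      ∀ (z w σ : ℝ), 0 ≤ w → 0 ≤ σ → σ ^ 2 ≤ C₀ * (1 + w) →
        (∫ e, |g z + σ * e| ^ (2 * s₀) ∂με)
          ≤ |z| ^ (2 * s₀) - rt * |z| ^ (2 * s₀ * (1 - ρ / (2 * s₀)))
            + C * w ^ (b * s₀) + C := by
  obtain ⟨K, hK, hint⟩ := aux_int (2 * s₀) (by linarith) με hprob hmean hvar hmom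
  obtain ⟨p, hp⟩ : ∃ p, p = 2 * s₀ := ⟨_, rfl⟩
  have hp2 : 2 ≤ p := by linarith
  have hs0 : 0 < s₀ := by linarith
  have hex : 2 * s₀ * (1 - ρ / (2 * s₀)) = p - ρ := by rw [hp]; field_simp
  rw [hex]
  simp only [← hp] at hint ⊢
  have hρ' : 0 < 2 - ρ := by linarith
  obtain ⟨B, hB⟩ : ∃ B, B = b * s₀ := ⟨_, rfl⟩
  rw [← hB]
  have hBs : s₀ ≤ B := by rw [hB]; nlinarith
  have hB0 : 0 < B := by linarith
  have hqB : 1 + (p - 2) / (2 - ρ) ≤ B := by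
    have e : 1 + (p - 2) / (2 - ρ) = (2 * s₀ - ρ) / (2 - ρ) := by rw [hp]; field_simp; ring
    rw [e]
    rcases hs₀.eq_or_lt with h | h
    · rw [hB, hb1 h.symm, ← h]
      rw [div_le_iff₀ hρ']; linarith
    · have := hb2 h
      rw [← hp, div_lt_iff₀ (by positivity)] at this
      rw [← hp, div_le_iff₀ hρ', hB]; linarith
  have hpq : 0 ≤ (p - 2) / (2 - ρ) := div_nonneg (by linarith) hρ'.le
  set q := (p - 2) / (2 - ρ) with hq
  -- constants
  set L := 2 * K / r with hL
  have hL0 : 0 < L := by positivity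
  set C1 := K * (C₀ * (L * C₀) ^ q) with hC1
  set C2 := K * C₀ ^ s₀ with hC2
  set C3 := K₀ ^ p + K * (K₀ ^ (p - 2) * C₀) + r / 2 * M₀ ^ (p - ρ) with hC3
  have hC1p : 0 < C1 := by positivity
  have hC2p : 0 < C2 := by positivity
  have hC3p : 0 < C3 := by positivity
  refine ⟨r / 2, by positivity, (C1 + C2 + C3) * 2 ^ B, fun z w σ hw hσ hσ2 => ?_⟩
  set W := (1 + w) ^ B with hW
  have hw1 : 1 ≤ 1 + w := by linarith
  have hW1 : 1 ≤ W := Real.one_le_rpow hw1 hB0.le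
  have hWw : 1 + w ≤ W := by
    calc 1 + w = (1 + w) ^ (1:ℝ) := (Real.rpow_one _).symm
      _ ≤ W := Real.rpow_le_rpow_of_exponent_le hw1 (by linarith)
  have hWle : W ≤ 2 ^ B * (w ^ B + 1) := by
    have hwB : 0 ≤ w ^ B := by positivity
    have h2B : (0:ℝ) < 2 ^ B := by positivity
    rcases le_total w 1 with h | h
    · have : W ≤ 2 ^ B := Real.rpow_le_rpow (by linarith) (by linarith) hB0.le
      nlinarith
    · have : W ≤ (2 * w) ^ B := Real.rpow_le_rpow (by linarith) (by linarith) hB0.le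
      rw [Real.mul_rpow (by norm_num) hw] at this
      linarith
  have hσp : K * σ ^ p ≤ C2 * W := by
    have e : σ ^ p = (σ ^ 2) ^ s₀ := by
      rw [← Real.rpow_two, ← Real.rpow_mul hσ, hp]
    have h1 : σ ^ p ≤ C₀ ^ s₀ * (1 + w) ^ s₀ := by
      rw [e, ← Real.mul_rpow hC₀.le (by linarith)]
      exact Real.rpow_le_rpow (by positivity) hσ2 hs0.le
    have h2 : (1 + w) ^ s₀ ≤ W := Real.rpow_le_rpow_of_exponent_le hw1 hBs
    have h3 : σ ^ p ≤ C₀ ^ s₀ * W := h1.trans (mul_le_mul_of_nonneg_left h2 (by positivity))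
    have := mul_le_mul_of_nonneg_left h3 hK.le
    rw [hC2]; linarith
  suffices hmain : (∫ e, |g z + σ * e| ^ p ∂με) ≤
      |z| ^ p - r / 2 * |z| ^ (p - ρ) + (C1 + C2 + C3) * W by
    have := mul_le_mul_of_nonneg_left hWle (show 0 ≤ C1 + C2 + C3 by positivity)
    linarith
  have hi := hint (g z) σ hσ
  have hσ2n : 0 ≤ σ ^ 2 := by positivity
  rcases le_total M₀ |z| with hz | hz
  · have hz0 : 0 < |z| := by linarith
    have hgz := hg1 z hz
    set x := r * |z| ^ (-ρ) with hx
    have hx0 : 0 < x := by positivity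
    have hx1 : 0 ≤ 1 - x := by
      by_contra hcon
      have : (1 - x) * |z| < 0 := mul_neg_of_neg_of_pos (by linarith) hz0
      have := abs_nonneg (g z)
      linarith
    have hgle : |g z| ≤ |z| := hgz.trans (by nlinarith)
    have h1 : |g z| ^ p ≤ |z| ^ p - r * |z| ^ (p - ρ) := by
      have h2 : |g z| ^ p ≤ (1 - x) ^ p * |z| ^ p := by
        rw [← Real.mul_rpow hx1 hz0.le]
        exact Real.rpow_le_rpow (abs_nonneg _) hgz (by linarith)
      have h3 : (1 - x) ^ p ≤ 1 - x := by
        calc (1 - x) ^ p ≤ (1 - x) ^ (1:ℝ) :=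
              Real.rpow_le_rpow_of_exponent_ge' hx1 (by linarith) zero_le_one (by linarith)
          _ = 1 - x := Real.rpow_one _
      have h4 : x * |z| ^ p = r * |z| ^ (p - ρ) := by
        rw [hx, mul_assoc, ← Real.rpow_add hz0]; congr 2; ring
      have h5 := mul_le_mul_of_nonneg_right h3 (show 0 ≤ |z| ^ p by positivity)
      linarith
    have h2 : |g z| ^ (p - 2) * σ ^ 2 ≤ |z| ^ (p - 2) * σ ^ 2 :=
      mul_le_mul_of_nonneg_right (Real.rpow_le_rpow (abs_nonneg _) hgle (by linarith)) hσ2n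
    have h3 : K * (|z| ^ (p - 2) * σ ^ 2) ≤ r / 2 * |z| ^ (p - ρ) + C1 * W := by
      have e : |z| ^ (p - ρ) = |z| ^ (p - 2) * |z| ^ (2 - ρ) := by
        rw [← Real.rpow_add hz0]; congr 1; ring
      rcases le_total (K * σ ^ 2) (r / 2 * |z| ^ (2 - ρ)) with h | h
      · have h4 := mul_le_mul_of_nonneg_left h (show 0 ≤ |z| ^ (p - 2) by positivity)
        have : 0 ≤ C1 * W := by positivity
        rw [e]; linarith
      · have h4 : |z| ^ (2 - ρ) ≤ L * σ ^ 2 := by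
          rw [hL, div_mul_eq_mul_div, le_div_iff₀ hr]; linarith
        have h5 : |z| ^ (2 - ρ) ≤ L * C₀ * (1 + w) := by
          have := mul_le_mul_of_nonneg_left hσ2 hL0.le
          linarith
        have h6 : |z| ^ (p - 2) ≤ (L * C₀) ^ q * (1 + w) ^ q := by
          have e2 : |z| ^ (p - 2) = (|z| ^ (2 - ρ)) ^ q := by
            rw [← Real.rpow_mul hz0.le]; congr 1; rw [hq]; field_simp
          rw [e2, ← Real.mul_rpow (by positivity) (by linarith)]
          exact Real.rpow_le_rpow (by positivity) h5 hpq
        have h7 : |z| ^ (p - 2) * σ ^ 2 ≤ ((L * C₀) ^ q * (1 + w) ^ q) * (C₀ * (1 + w)) :=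
          mul_le_mul h6 hσ2 hσ2n (by positivity)
        have h8 : (1 + w) ^ q * (1 + w) ≤ W := by
          rw [← Real.rpow_add_one (by linarith)]
          exact Real.rpow_le_rpow_of_exponent_le hw1 (by linarith)
        have h9 := mul_le_mul_of_nonneg_left h7 hK.le
        have h10 := mul_le_mul_of_nonneg_left h8 hC1p.le
        have h11 : 0 ≤ r / 2 * |z| ^ (p - ρ) := by positivity
        have e3 : K * ((L * C₀) ^ q * (1 + w) ^ q * (C₀ * (1 + w))) =
          C1 * ((1 + w) ^ q * (1 + w)) := by rw [hC1]; ring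
        linarith
    have h4 := mul_le_mul_of_nonneg_left h2 hK.le
    have h5 : 0 ≤ C3 * W := by positivity
    linarith
  · have hgz := hg2 z hz
    have h1 : |g z| ^ p ≤ K₀ ^ p := Real.rpow_le_rpow (abs_nonneg _) hgz (by linarith)
    have h2 : |g z| ^ (p - 2) ≤ K₀ ^ (p - 2) :=
      Real.rpow_le_rpow (abs_nonneg _) hgz (by linarith)
    have h3 : |z| ^ (p - ρ) ≤ M₀ ^ (p - ρ) :=
      Real.rpow_le_rpow (abs_nonneg _) hz (by linarith)
    have h4 : |g z| ^ (p - 2) * σ ^ 2 ≤ K₀ ^ (p - 2) * (C₀ * W) :=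
      mul_le_mul h2 (hσ2.trans (mul_le_mul_of_nonneg_left hWw hC₀.le)) hσ2n (by positivity)
    have h5 := mul_le_mul_of_nonneg_left h4 hK.le
    have h6 := mul_le_mul_of_nonneg_left h3 (show 0 ≤ r / 2 by positivity)
    have h7 : K₀ ^ p * 1 ≤ K₀ ^ p * W := mul_le_mul_of_nonneg_left hW1 (by positivity)
    have h8 : r / 2 * M₀ ^ (p - ρ) * 1 ≤ r / 2 * M₀ ^ (p - ρ) * W :=
      mul_le_mul_of_nonneg_left hW1 (by positivity)
    have h9 : 0 ≤ |z| ^ p := by positivity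
    have h10 : 0 ≤ C1 * W := by positivity
    have h11 : C3 * W = K₀ ^ p * W + K * (K₀ ^ (p - 2) * (C₀ * W))
      + r / 2 * M₀ ^ (p - ρ) * W := by rw [hC3]; ring
    linarith
end

section
/- Let q ≥ 1, m ≥ 1, ω > 0 and α₁,…,α_q ≥ 0. Let ε be a real random variable with E[|ε|^{2m}] < ∞, and let ‖·‖_• be a monotone vector norm on ℝ^q such that λ := sup_{‖x‖_•=1}(E[‖Λ_ε x‖_•^m])^{1/m} < 1, where Λ_ε is the random companion matrix with first row (α₁ε²,…,α_qε²), ones on the subdiagonal and zeros elsewhere. Then there exist constants λ̃ ∈ (0,1) and C < ∞ such that for all ζ₀, ζ₁, …, ζ_q ∈ (0,1] and all ξ ∈ ℝ^q with nonnegative entries, E[‖Λ_{ζ,ε}ξ + ζ₀ω ε² e₁‖_•^m] ≤ (1−λ̃)‖ξ‖_•^m + C, where Λ_{ζ,ε} is the companion matrix with first row (α₁ζ₁ε²,…,α_qζ_qε²), ones on the subdiagonal and zeros elsewhere, and e₁ = (1,0,…,0)' ∈ ℝ^q. -/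
open MeasureTheory

/-- The random companion matrix Λ_ε with first row (α₁ε²,…,α_qε²) and ones on the
subdiagonal, as a function of the realization e of ε. -/
def lambdaMat (q : ℕ) (αc : ℕ → ℝ) (e : ℝ) : Matrix (Fin q) (Fin q) ℝ :=
  Matrix.of fun i j =>
    if (i : ℕ) = 0 then αc ((j : ℕ) + 1) * e ^ 2
    else if (i : ℕ) = (j : ℕ) + 1 then 1 else 0

/-- The companion matrix Λ_{ζ,ε} with first row (α₁ζ₁ε²,…,α_qζ_qε²) and ones on the
subdiagonal. -/
def lambdaZetaMat (q : ℕ) (αc : ℕ → ℝ) (ζv : ℕ → ℝ) (e : ℝ) :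
    Matrix (Fin q) (Fin q) ℝ :=
  Matrix.of fun i j =>
    if (i : ℕ) = 0 then αc ((j : ℕ) + 1) * ζv ((j : ℕ) + 1) * e ^ 2
    else if (i : ℕ) = (j : ℕ) + 1 then 1 else 0

theorem aux_conv (m : ℝ) (hm : 1 ≤ m) (t : ℝ) (h0 : 0 < t) (h1 : t < 1) (a b : ℝ)
    (ha : 0 ≤ a) (hb : 0 ≤ b) :
    (a + b) ^ m ≤ t ^ (1 - m) * a ^ m + (1 - t) ^ (1 - m) * b ^ m := by
  have h2 : 0 < 1 - t := by linarith
  have key := (convexOn_rpow hm).2 (x := a / t) (y := b / (1 - t))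
    (Set.mem_Ici.2 (by positivity)) (Set.mem_Ici.2 (by positivity)) h0.le h2.le (by ring)
  simp only [smul_eq_mul] at key
  have e1 : t * (a / t) + (1 - t) * (b / (1 - t)) = a + b := by
    field_simp
  rw [e1, Real.div_rpow ha h0.le, Real.div_rpow hb h2.le] at key
  rw [Real.rpow_sub h0, Real.rpow_sub h2, Real.rpow_one, Real.rpow_one]
  refine key.trans (le_of_eq ?_)
  ring

theorem aux_upper {q : ℕ} (N : (Fin q → ℝ) → ℝ) (hN : IsVectorNorm N)
    (hmono : IsMonotoneNorm N) (x : Fin q → ℝ) : N x ≤ N 1 * ‖x‖ := by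
  have h := hmono x (‖x‖ • (1 : Fin q → ℝ)) (fun i => by
    simpa using norm_le_pi_norm x i)
  rw [hN.2.2.1, abs_of_nonneg (norm_nonneg x)] at h
  linarith

theorem aux_cont {q : ℕ} (N : (Fin q → ℝ) → ℝ) (hN : IsVectorNorm N)
    (hmono : IsMonotoneNorm N) : Continuous N := by
  have h : LipschitzWith (N 1).toNNReal N := by
    apply LipschitzWith.of_le_add_mul
    intro x y
    rw [Real.coe_toNNReal _ (hN.1 1), dist_eq_norm]
    have h1 := hN.2.2.2 (x - y) y
    have h2 := aux_upper N hN hmono (x - y)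
    rw [sub_add_cancel] at h1
    linarith
  exact h.continuous

theorem aux_lower {q : ℕ} (N : (Fin q → ℝ) → ℝ) (hN : IsVectorNorm N)
    (hmono : IsMonotoneNorm N) : ∃ K : ℝ, 0 ≤ K ∧ ∀ x, ‖x‖ ≤ K * N x := by
  have hnn : ∀ j : Fin q, 0 ≤ (N (Pi.single j 1))⁻¹ := fun j => inv_nonneg.2 (hN.1 _)
  have hK : 0 ≤ ∑ j : Fin q, (N (Pi.single j 1))⁻¹ := Finset.sum_nonneg fun j _ => hnn j
  refine ⟨∑ j : Fin q, (N (Pi.single j 1))⁻¹, hK, fun x => ?_⟩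
  rw [pi_norm_le_iff_of_nonneg (mul_nonneg hK (hN.1 x))]
  intro j
  have hpos : 0 < N (Pi.single j 1) := by
    refine lt_of_le_of_ne (hN.1 _) (fun h => ?_)
    have := (hN.2.1 _).1 h.symm
    have := congrFun this j
    simp at this
  have h := hmono (x j • (Pi.single j 1 : Fin q → ℝ)) x (fun i => by
    by_cases hij : i = j
    · subst hij; simp
    · simp [hij])
  rw [hN.2.2.1] at h
  have h2 : |x j| ≤ (N (Pi.single j 1))⁻¹ * N x := by
    rw [inv_mul_eq_div, le_div_iff₀ hpos]; exact h
  refine h2.trans (mul_le_mul_of_nonneg_right ?_ (hN.1 x))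
  exact Finset.single_le_sum (f := fun j : Fin q => (N (Pi.single j 1))⁻¹)
    (fun j _ => hnn j) (Finset.mem_univ j)

theorem aux_mat {q : ℕ} (N : (Fin q → ℝ) → ℝ) (hN : IsVectorNorm N)
    (hmono : IsMonotoneNorm N) (M : Matrix (Fin q) (Fin q) ℝ) :
    ∃ K : ℝ, 0 ≤ K ∧ ∀ x, N (M.mulVec x) ≤ K * N x := by
  obtain ⟨K, hK, hKx⟩ := aux_lower N hN hmono
  let L := LinearMap.toContinuousLinearMap M.mulVecLin
  refine ⟨N 1 * (‖L‖ * K), mul_nonneg (hN.1 1) (mul_nonneg (norm_nonneg _) hK), fun x => ?_⟩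
  calc N (M.mulVec x) ≤ N 1 * ‖M.mulVec x‖ := aux_upper N hN hmono _
    _ ≤ N 1 * (‖L‖ * ‖x‖) := mul_le_mul_of_nonneg_left (L.le_opNorm x) (hN.1 1)
    _ ≤ N 1 * (‖L‖ * (K * N x)) := mul_le_mul_of_nonneg_left
        (mul_le_mul_of_nonneg_left (hKx x) (norm_nonneg _)) (hN.1 1)
    _ = _ := by ring

theorem aux_split (q : ℕ) (αc : ℕ → ℝ) (e : ℝ) :
    lambdaMat q αc e = e ^ 2 • (lambdaMat q αc 1 - lambdaMat q αc 0) + lambdaMat q αc 0 := by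
  ext i j
  simp only [lambdaMat, Matrix.of_apply, Matrix.add_apply, Matrix.smul_apply, Matrix.sub_apply,
    smul_eq_mul]
  split_ifs <;> ring

theorem aux_bound {q : ℕ} (αc : ℕ → ℝ) (N : (Fin q → ℝ) → ℝ) (hN : IsVectorNorm N)
    (hmono : IsMonotoneNorm N) :
    ∃ D : ℝ, 0 ≤ D ∧ ∀ e x, N ((lambdaMat q αc e).mulVec x) ≤ D * N x * (e ^ 2 + 1) := by
  obtain ⟨A, hA, hAx⟩ := aux_mat N hN hmono (lambdaMat q αc 1 - lambdaMat q αc 0)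
  obtain ⟨B, hB, hBx⟩ := aux_mat N hN hmono (lambdaMat q αc 0)
  refine ⟨A + B, by positivity, fun e x => ?_⟩
  rw [aux_split, Matrix.add_mulVec, Matrix.smul_mulVec]
  have h := hN.2.2.2 (e ^ 2 • (lambdaMat q αc 1 - lambdaMat q αc 0).mulVec x)
    ((lambdaMat q αc 0).mulVec x)
  rw [hN.2.2.1, abs_of_nonneg (sq_nonneg e)] at h
  have h1 := mul_le_mul_of_nonneg_left (hAx x) (sq_nonneg e)
  have h2 := hBx x
  have h3 := mul_nonneg hA (hN.1 x)
  have h4 := mul_nonneg (mul_nonneg hB (hN.1 x)) (sq_nonneg e)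
  nlinarith

theorem aux_pow (m e : ℝ) : (e ^ 2) ^ m = |e| ^ (2 * m) := by
  rw [← sq_abs, Real.rpow_mul (abs_nonneg e)]
  norm_num

/-- contraction drift bound for the ARCH component V₃.  If the monotone
norm ‖·‖_• satisfies λ = sup_{‖x‖_•=1}(E‖Λ_εx‖_•^m)^{1/m} < 1, then there are
λ̃ ∈ (0,1) and C < ∞ such that for all ζ₀,…,ζ_q ∈ (0,1] and all entrywise nonnegative
ξ ∈ ℝ^q: E[‖Λ_{ζ,ε}ξ + ζ₀ωε²e₁‖_•^m] ≤ (1−λ̃)‖ξ‖_•^m + C. -/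
theorem stmt_13 (q : ℕ) (hq : 1 ≤ q) (m : ℝ) (hm : 1 ≤ m)
    (ω : ℝ) (hω : 0 < ω) (αc : ℕ → ℝ) (hα : ∀ i, 1 ≤ i → i ≤ q → 0 ≤ αc i)
    (με : Measure ℝ) (hprob : IsProbabilityMeasure με)
    (hmom : Integrable (fun e => |e| ^ (2 * m)) με)
    (N : (Fin q → ℝ) → ℝ) (hN : IsVectorNorm N) (hmono : IsMonotoneNorm N)
    (hlam : sSup {c : ℝ | ∃ x : Fin q → ℝ, N x = 1 ∧
      c = (∫ e, N ((lambdaMat q αc e).mulVec x) ^ m ∂με) ^ (1 / m)} < 1) :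
    ∃ lamt : ℝ, 0 < lamt ∧ lamt < 1 ∧ ∃ C : ℝ,
      ∀ ζv : ℕ → ℝ, (∀ i, i ≤ q → 0 < ζv i ∧ ζv i ≤ 1) →
      ∀ ξ : Fin q → ℝ, (∀ j, 0 ≤ ξ j) →
        (∫ e, N ((lambdaZetaMat q αc ζv e).mulVec ξ
            + fun i : Fin q => if (i : ℕ) = 0 then ζv 0 * ω * e ^ 2 else 0) ^ m ∂με)
          ≤ (1 - lamt) * N ξ ^ m + C := by
  have hm0 : 0 < m := by linarith
  obtain ⟨D, hD, hDx⟩ := aux_bound αc N hN hmono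
  have hcN := aux_cont N hN hmono
  -- dominating function
  have hgint : Integrable (fun e : ℝ => (e ^ 2 + 1) ^ m) με := by
    have hg : Integrable (fun e : ℝ => (1 / 2 : ℝ) ^ (1 - m) * |e| ^ (2 * m)
        + (1 - 1 / 2 : ℝ) ^ (1 - m) * (1 : ℝ) ^ m) με :=
      (hmom.const_mul _).add (integrable_const _)
    refine hg.mono' ?_ (Filter.Eventually.of_forall fun e => ?_)
    · exact (Continuous.rpow_const (by fun_prop) (fun _ => Or.inr hm0.le)).aestronglyMeasurable
    · rw [Real.norm_of_nonneg (by positivity), ← aux_pow]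
      exact aux_conv m hm (1 / 2) (by norm_num) (by norm_num) _ _ (sq_nonneg e) zero_le_one
  have hdom : ∀ x e, N ((lambdaMat q αc e).mulVec x) ^ m
      ≤ (D * N x) ^ m * (e ^ 2 + 1) ^ m := by
    intro x e
    rw [← Real.mul_rpow (mul_nonneg hD (hN.1 x)) (by positivity)]
    exact Real.rpow_le_rpow (hN.1 _) (hDx e x) hm0.le
  have hint : ∀ x, Integrable (fun e => N ((lambdaMat q αc e).mulVec x) ^ m) με := by
    intro x
    refine (hgint.const_mul ((D * N x) ^ m)).mono' ?_ (Filter.Eventually.of_forall fun e => ?_)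
    · refine (Continuous.rpow_const (hcN.comp ?_) (fun _ => Or.inr hm0.le)).aestronglyMeasurable
      have : (fun e => (lambdaMat q αc e).mulVec x) = fun e : ℝ =>
          e ^ 2 • (lambdaMat q αc 1 - lambdaMat q αc 0).mulVec x
            + (lambdaMat q αc 0).mulVec x := by
        funext e
        rw [aux_split, Matrix.add_mulVec, Matrix.smul_mulVec]
      rw [this]
      fun_prop
    · rw [Real.norm_of_nonneg (Real.rpow_nonneg (hN.1 _) _)]
      exact hdom x e
  have hI0 : ∀ x, 0 ≤ ∫ e, N ((lambdaMat q αc e).mulVec x) ^ m ∂με := fun x =>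
    integral_nonneg fun e => Real.rpow_nonneg (hN.1 _) _
  set S := {c : ℝ | ∃ x : Fin q → ℝ, N x = 1 ∧
      c = (∫ e, N ((lambdaMat q αc e).mulVec x) ^ m ∂με) ^ (1 / m)} with hS
  have hbdd : BddAbove S := by
    refine ⟨(D ^ m * ∫ e, (e ^ 2 + 1) ^ m ∂με) ^ (1 / m), ?_⟩
    rintro c ⟨x, hx, rfl⟩
    refine Real.rpow_le_rpow (hI0 x) ?_ (by positivity)
    rw [← integral_const_mul]
    refine integral_mono (hint x) (hgint.const_mul _) (fun e => ?_)
    have := hdom x e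
    rwa [hx, mul_one] at this
  obtain ⟨t, ht, ht1⟩ := exists_between (max_lt hlam zero_lt_one)
  have hSt := (le_max_left _ _).trans_lt ht
  have ht0 := (le_max_right _ _).trans_lt ht
  have hunit : ∀ x, N x = 1 → ∫ e, N ((lambdaMat q αc e).mulVec x) ^ m ∂με ≤ t ^ m := by
    intro x hx
    have h1 : (∫ e, N ((lambdaMat q αc e).mulVec x) ^ m ∂με) ^ (1 / m) ≤ t :=
      (le_csSup hbdd ⟨x, hx, rfl⟩).trans hSt.le
    have h2 := Real.rpow_le_rpow (Real.rpow_nonneg (hI0 x) _) h1 hm0.le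
    rwa [← Real.rpow_mul (hI0 x), one_div_mul_cancel hm0.ne', Real.rpow_one] at h2
  have hall : ∀ x, ∫ e, N ((lambdaMat q αc e).mulVec x) ^ m ∂με ≤ t ^ m * N x ^ m := by
    intro x
    by_cases hx : x = 0
    · subst hx
      have h0 : N 0 = 0 := (hN.2.1 0).2 rfl
      simp [h0, Real.zero_rpow hm0.ne']
    · have hpos : 0 < N x := lt_of_le_of_ne (hN.1 x) fun h => hx ((hN.2.1 x).1 h.symm)
      have h1 : N ((N x)⁻¹ • x) = 1 := by
        rw [hN.2.2.1, abs_of_pos (inv_pos.2 hpos), inv_mul_cancel₀ hpos.ne']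
      have h2 := hunit _ h1
      have h3 : ∀ e, N ((lambdaMat q αc e).mulVec x) ^ m
          = N x ^ m * N ((lambdaMat q αc e).mulVec ((N x)⁻¹ • x)) ^ m := by
        intro e
        rw [← Real.mul_rpow hpos.le (hN.1 _), Matrix.mulVec_smul, hN.2.2.1,
          abs_of_pos (inv_pos.2 hpos), mul_inv_cancel_left₀ hpos.ne']
      simp_rw [h3]
      rw [integral_const_mul, mul_comm]
      exact mul_le_mul_of_nonneg_right h2 (Real.rpow_nonneg hpos.le _)
  let b : Fin q → ℝ := fun i => if (i : ℕ) = 0 then ω else 0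
  refine ⟨1 - t, by linarith, by linarith,
    (1 - t) ^ (1 - m) * (N b ^ m * ∫ e, |e| ^ (2 * m) ∂με), ?_⟩
  intro ζv hζ ξ hξ
  have hpt : ∀ e, N ((lambdaZetaMat q αc ζv e).mulVec ξ
      + fun i : Fin q => if (i : ℕ) = 0 then ζv 0 * ω * e ^ 2 else 0) ^ m
      ≤ t ^ (1 - m) * N ((lambdaMat q αc e).mulVec ξ) ^ m
        + (1 - t) ^ (1 - m) * (N b ^ m * |e| ^ (2 * m)) := by
    intro e
    have hle : N ((lambdaZetaMat q αc ζv e).mulVec ξ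
        + fun i : Fin q => if (i : ℕ) = 0 then ζv 0 * ω * e ^ 2 else 0)
        ≤ N ((lambdaMat q αc e).mulVec ξ + e ^ 2 • b) := by
      apply hmono
      intro i
      have hz : ∀ j : Fin q, 0 ≤ lambdaZetaMat q αc ζv e i j ∧
          lambdaZetaMat q αc ζv e i j ≤ lambdaMat q αc e i j := by
        intro j
        have ha := hα (j + 1) (by omega) (by omega)
        obtain ⟨z0, z1⟩ := hζ (j + 1) (by omega)
        simp only [lambdaZetaMat, lambdaMat, Matrix.of_apply]
        split_ifs
        · refine ⟨by positivity, mul_le_mul_of_nonneg_right ?_ (sq_nonneg e)⟩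
          exact mul_le_of_le_one_right ha z1
        · simp
        · simp
      have h1 : 0 ≤ (lambdaZetaMat q αc ζv e).mulVec ξ i := by
        simp only [Matrix.mulVec, dotProduct]
        exact Finset.sum_nonneg fun j _ => mul_nonneg (hz j).1 (hξ j)
      have h2 : (lambdaZetaMat q αc ζv e).mulVec ξ i ≤ (lambdaMat q αc e).mulVec ξ i := by
        simp only [Matrix.mulVec, dotProduct]
        exact Finset.sum_le_sum fun j _ => mul_le_mul_of_nonneg_right (hz j).2 (hξ j)
      obtain ⟨z0, z1⟩ := hζ 0 (by omega)
      have h3 : 0 ≤ (if (i : ℕ) = 0 then ζv 0 * ω * e ^ 2 else 0) := by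
        split_ifs <;> positivity
      have h4 : (if (i : ℕ) = 0 then ζv 0 * ω * e ^ 2 else 0) ≤ e ^ 2 * b i := by
        simp only [b]
        split_ifs
        · have := mul_le_mul_of_nonneg_right z1 (mul_nonneg hω.le (sq_nonneg e))
          nlinarith
        · simp
      simp only [Pi.add_apply, Pi.smul_apply, smul_eq_mul]
      rw [abs_of_nonneg (by linarith), abs_of_nonneg (by linarith)]
      linarith
    have htri := hN.2.2.2 ((lambdaMat q αc e).mulVec ξ) (e ^ 2 • b)
    rw [hN.2.2.1, abs_of_nonneg (sq_nonneg e)] at htri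
    have h5 := Real.rpow_le_rpow (hN.1 _) (hle.trans htri) hm0.le
    have h6 := aux_conv m hm t ht0 ht1 (N ((lambdaMat q αc e).mulVec ξ)) (e ^ 2 * N b)
      (hN.1 _) (mul_nonneg (sq_nonneg e) (hN.1 b))
    rw [Real.mul_rpow (sq_nonneg e) (hN.1 b), aux_pow, mul_comm (|e| ^ (2 * m))] at h6
    exact h5.trans h6
  have hi1 := (hint ξ).const_mul (t ^ (1 - m))
  have hi2 := (hmom.const_mul (N b ^ m)).const_mul ((1 - t) ^ (1 - m))
  have h7 := integral_mono_of_nonneg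
    (Filter.Eventually.of_forall fun e => Real.rpow_nonneg (hN.1 _) m)
    (hi1.add hi2) (Filter.Eventually.of_forall hpt)
  refine h7.trans ?_
  have h8 := integral_add hi1 hi2
  simp only [integral_const_mul] at h8
  refine (le_of_eq h8).trans ?_
  have h9 := mul_le_mul_of_nonneg_left (hall ξ) (Real.rpow_nonneg ht0.le (1 - m))
  rw [← mul_assoc, ← Real.rpow_add ht0, sub_add_cancel, Real.rpow_one] at h9
  linarith
end

section
/- Under Assumptions 1–4 there exist constants s₁ > 0, s₂ > 0, ẽ > 0, an integer N ≥ 1 and a finite constant b̃ such that the function V(x) = 1 + |z₁(x₁)|^{2s₀} + s₁‖z₂(x₁)‖_*^{2s₀α} + s₂‖ξ(x)‖_•^{b s₀} satisfies, for every x ∈ ℝ^{p+q}, E[V(Y₁) | Y₀ = x] ≤ V(x) − ẽ·V(x)^α + b̃·1_{A_N}(x), where A_N = { x ∈ ℝ^{p+q} : |z₁(x₁)|^{2s₀} ≤ N, ‖z₂(x₁)‖_*^{2s₀α} ≤ N, ‖ξ(x)‖_•^{b s₀ α} ≤ N }. That is, the chain satisfies the subgeometric drift Condition D with φ(v) = ẽ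 v^α and petite-candidate set A_N. -/
open MeasureTheory Filter

noncomputable section

/-- The matrix norm induced by a vector norm N: |||A||| = sup_{N x = 1} N (A x). -/
def inducedMatNorm {d : ℕ} (N : (Fin d → ℝ) → ℝ)
    (A : Matrix (Fin d) (Fin d) ℝ) : ℝ :=
  sSup {c : ℝ | ∃ x : Fin d → ℝ, N x = 1 ∧ c = N (A.mulVec x)}

/-! ### The AR–ARCH model

The state at time t is Y_t = (y_t, …, y_{t−p−q+1}) ∈ ℝ^{p+q} (0-indexed in Lean:
coordinate i of the state holds y_{t−i}). -/

/-- Coordinate access for a state vector, 0-indexed, junk value 0 outside the range. -/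
def coordVal {n : ℕ} (x : Fin n → ℝ) (i : ℕ) : ℝ :=
  if h : i < n then x ⟨i, h⟩ else 0

/-- u_{−j}(x) = x_{j+1} − π₁x_{j+2} − ⋯ − π_{p−1}x_{j+p} (1-indexed), j = 0,…,q. -/
def uLag (p q : ℕ) (πc : ℕ → ℝ) (x : Fin (p + q) → ℝ) (j : ℕ) : ℝ :=
  coordVal x j - ∑ i ∈ Finset.Icc 1 (p - 1), πc i * coordVal x (j + i)

/-- z₁(x₁) = x₁ − π₁x₂ − ⋯ − π_{p−1}x_p. -/
def z1 (p q : ℕ) (πc : ℕ → ℝ) (x : Fin (p + q) → ℝ) : ℝ := uLag p q πc x 0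

/-- z₂(x₁) = (x₂, …, x_p) ∈ ℝ^{p−1}. -/
def z2 (p q : ℕ) (x : Fin (p + q) → ℝ) : Fin (p - 1) → ℝ :=
  fun i => coordVal x ((i : ℕ) + 1)

/-- e_{−j}(x) = u_{−j}(x) − g(u_{−j−1}(x)), j = 0,…,q−1. -/
def eLag (p q : ℕ) (πc : ℕ → ℝ) (g : ℝ → ℝ) (x : Fin (p + q) → ℝ) (j : ℕ) : ℝ :=
  uLag p q πc x j - g (uLag p q πc x (j + 1))

/-- ξ(x) = (e₀(x)², …, e_{1−q}(x)²) ∈ ℝ^q. -/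
def xiVec (p q : ℕ) (πc : ℕ → ℝ) (g : ℝ → ℝ) (x : Fin (p + q) → ℝ) : Fin q → ℝ :=
  fun j => (eLag p q πc g x (j : ℕ)) ^ 2

/-- The squared conditional volatility
σ(x)² = ζ₀(x)ω + Σ_{i=1}^q α_iζ_i(x)e_{1−i}(x)². -/
def sigma2 (p q : ℕ) (πc : ℕ → ℝ) (g : ℝ → ℝ) (ω : ℝ) (αc : ℕ → ℝ)
    (ζ : ℕ → (Fin (p + q) → ℝ) → ℝ) (x : Fin (p + q) → ℝ) : ℝ :=
  ζ 0 x * ω + ∑ i ∈ Finset.Icc 1 q, αc i * ζ i x * (eLag p q πc g x (i - 1)) ^ 2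

/-- One step of the chain from state x with innovation ε = e:
the new first coordinate is π₁x₁+⋯+π_{p−1}x_{p−1} + g(z₁(x₁)) + σ(x)e and the other
coordinates are shifted. -/
def oneStep (p q : ℕ) (πc : ℕ → ℝ) (g : ℝ → ℝ) (ω : ℝ) (αc : ℕ → ℝ)
    (ζ : ℕ → (Fin (p + q) → ℝ) → ℝ) (x : Fin (p + q) → ℝ) (e : ℝ) :
    Fin (p + q) → ℝ :=
  fun i => if (i : ℕ) = 0 then
      (∑ k ∈ Finset.Icc 1 (p - 1), πc k * coordVal x (k - 1)) + g (z1 p q πc x)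
        + Real.sqrt (sigma2 p q πc g ω αc ζ x) * e
    else coordVal x ((i : ℕ) - 1)

/-- The one-step transition kernel P(x; ·): the law of Y₁ given Y₀ = x, με being the
law of the innovation ε₁. -/
def kernelP (p q : ℕ) (πc : ℕ → ℝ) (g : ℝ → ℝ) (ω : ℝ) (αc : ℕ → ℝ)
    (ζ : ℕ → (Fin (p + q) → ℝ) → ℝ) (με : Measure ℝ) (x : Fin (p + q) → ℝ) :
    Measure (Fin (p + q) → ℝ) :=
  με.map (oneStep p q πc g ω αc ζ x)

/-- The n-step transition kernel P^n(x; ·). -/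
def kernelPn (p q : ℕ) (πc : ℕ → ℝ) (g : ℝ → ℝ) (ω : ℝ) (αc : ℕ → ℝ)
    (ζ : ℕ → (Fin (p + q) → ℝ) → ℝ) (με : Measure ℝ) :
    ℕ → (Fin (p + q) → ℝ) → Measure (Fin (p + q) → ℝ)
  | 0, x => Measure.dirac x
  | (n + 1), x => (kernelPn p q πc g ω αc ζ με n x).bind (kernelP p q πc g ω αc ζ με)

/-- The f-norm ‖μ − ν‖_f = sup{ |∫f₀dμ − ∫f₀dν| : f₀ measurable, |f₀| ≤ f } of the
difference of two (finite) measures.  With f ≡ 1 it is the total variation norm. -/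
def fNormDiff {S : Type*} [MeasurableSpace S] (μ ν : Measure S) (f : S → ℝ) : ℝ :=
  sSup {c : ℝ | ∃ f₀ : S → ℝ, Measurable f₀ ∧ (∀ y, |f₀ y| ≤ f y) ∧
    c = |(∫ y, f₀ y ∂μ) - ∫ y, f₀ y ∂ν|}

/-- The (p−1)×(p−1) companion matrix Π₁ with first row (π₁,…,π_{p−1}) and ones on the
subdiagonal. -/
def piMatOne (p : ℕ) (πc : ℕ → ℝ) : Matrix (Fin (p - 1)) (Fin (p - 1)) ℝ :=
  Matrix.of fun i j =>
    if (i : ℕ) = 0 then πc ((j : ℕ) + 1)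
    else if (i : ℕ) = (j : ℕ) + 1 then 1 else 0

/-! ### Assumptions 1–4 -/

/-- Assumption 1: the innovation law is a probability measure with mean zero, unit
variance, and a Lebesgue density bounded away from zero on compact subsets of ℝ.
(Independence of the ε_t and of the initial values is built into the Markov-kernel
formulation of the model.) -/
def Assump1 (με : Measure ℝ) : Prop :=
  IsProbabilityMeasure με ∧ (∫ e, e ∂με) = 0 ∧ (∫ e, e ^ 2 ∂με) = 1 ∧
  ∃ dens : ℝ → ℝ, Measurable dens ∧ (∀ e, 0 ≤ dens e) ∧
    με = MeasureTheory.volume.withDensity (fun e => ENNReal.ofReal (dens e)) ∧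
    ∀ K : Set ℝ, IsCompact K → ∃ c : ℝ, 0 < c ∧ ∀ e ∈ K, c ≤ dens e

/-- Assumption 2(i): all roots of 1 − π₁z − ⋯ − π_{p−1}z^{p−1} lie outside the unit
circle. -/
def Assump2i (p : ℕ) (πc : ℕ → ℝ) : Prop :=
  ∀ z : ℂ, (1 - ∑ i ∈ Finset.Icc 1 (p - 1), (πc i : ℂ) * z ^ i) = 0 →
    1 < ‖z‖

/-- Assumption 2(ii): g is measurable, locally bounded, |g(u)| → ∞ as |u| → ∞, and
|g(u)| ≤ (1 − r|u|^{−ρ})|u| for |u| ≥ M₀, |g(u)| ≤ K₀ for |u| ≤ M₀. -/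
def Assump2ii (g : ℝ → ℝ) (r M₀ K₀ ρ : ℝ) : Prop :=
  Measurable g ∧
  (∀ K : Set ℝ, IsCompact K → ∃ B : ℝ, ∀ u ∈ K, |g u| ≤ B) ∧
  Tendsto (fun u : ℝ => |g u|) (cocompact ℝ) atTop ∧
  0 < r ∧ 0 < M₀ ∧ 0 < K₀ ∧ 0 < ρ ∧ ρ < 2 ∧
  (∀ u : ℝ, M₀ ≤ |u| → |g u| ≤ (1 - r * |u| ^ (-ρ)) * |u|) ∧
  (∀ u : ℝ, |u| ≤ M₀ → |g u| ≤ K₀)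

/-- Assumption 3: ω > 0, α_i ≥ 0 with Σ_{i=1}^q α_i < 1, and each ζ_i takes values in
(0,1]. -/
def Assump3 (p q : ℕ) (ω : ℝ) (αc : ℕ → ℝ)
    (ζ : ℕ → (Fin (p + q) → ℝ) → ℝ) : Prop :=
  0 < ω ∧ (∀ i, 1 ≤ i → i ≤ q → 0 ≤ αc i) ∧
  (∑ i ∈ Finset.Icc 1 q, αc i) < 1 ∧
  ∀ i, i ≤ q → ∀ x, 0 < ζ i x ∧ ζ i x ≤ 1

/-- The constants s₀ ≥ 1 and b ≥ 1 satisfy b = 1 when s₀ = 1 and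
b > (2s₀−ρ)/(s₀(2−ρ)) when s₀ > 1. -/
def ConstsOK (s₀ b ρ : ℝ) : Prop :=
  1 ≤ s₀ ∧ 1 ≤ b ∧ (s₀ = 1 → b = 1) ∧
  (1 < s₀ → (2 * s₀ - ρ) / (s₀ * (2 - ρ)) < b)

/-- Assumption 4: there is a monotone vector norm ‖·‖_• on ℝ^q such that
λ = sup_{‖x‖_•=1}(E[‖Λ₁x‖_•^{bs₀}])^{1/(bs₀)} < 1 (this tacitly requires
E[|ε₁|^{2bs₀}] < ∞). -/
def Assump4 (q : ℕ) (αc : ℕ → ℝ) (με : Measure ℝ) (b s₀ : ℝ)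
    (Nb : (Fin q → ℝ) → ℝ) : Prop :=
  IsVectorNorm Nb ∧ IsMonotoneNorm Nb ∧
  Integrable (fun e => |e| ^ (2 * b * s₀)) με ∧
  sSup {c : ℝ | ∃ x : Fin q → ℝ, Nb x = 1 ∧
    c = (∫ e, Nb ((lambdaMat q αc e).mulVec x) ^ (b * s₀) ∂με) ^ (1 / (b * s₀))} < 1

/-- The drift function
V(x) = 1 + |z₁(x₁)|^{2s₀} + s₁‖z₂(x₁)‖_*^{2s₀α} + s₂‖ξ(x)‖_•^{bs₀}
(the z₂ term vanishes automatically when p = 1). -/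
def Vfun (p q : ℕ) (πc : ℕ → ℝ) (g : ℝ → ℝ) (s₁ s₂ s₀ b α : ℝ)
    (Nstar : (Fin (p - 1) → ℝ) → ℝ) (Nb : (Fin q → ℝ) → ℝ)
    (x : Fin (p + q) → ℝ) : ℝ :=
  1 + |z1 p q πc x| ^ (2 * s₀) + s₁ * Nstar (z2 p q x) ^ (2 * s₀ * α)
    + s₂ * Nb (xiVec p q πc g x) ^ (b * s₀)

end


lemma h_pow_split (κ δ : ℝ) (hκ : 0 < κ) (hδ : 0 < δ) :
    ∃ C : ℝ, 0 ≤ C ∧ ∀ a y : ℝ, 0 ≤ a → 0 ≤ y →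
      (a + y) ^ κ ≤ (1 + δ) * a ^ κ + C * y ^ κ := by
  set η : ℝ := (1 + δ) ^ (1 / κ) - 1 with hη
  have hηpos : 0 < η := by
    have : 1 < (1 + δ) ^ (1 / κ) := Real.one_lt_rpow (by linarith) (by positivity)
    linarith
  refine ⟨(1 / η + 1) ^ κ, by positivity, fun a y ha hy => ?_⟩
  by_cases h : y ≤ η * a
  · have h1 : (a + y) ^ κ ≤ ((1 + η) * a) ^ κ :=
      Real.rpow_le_rpow (by positivity) (by linarith) hκ.le
    rw [Real.mul_rpow (by positivity) ha] at h1
    have h2 : (1 + η) ^ κ = 1 + δ := by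
      have : 1 + η = (1 + δ) ^ (1 / κ) := by rw [hη]; ring
      rw [this, ← Real.rpow_mul (by positivity)]
      field_simp
      simp
    rw [h2] at h1
    have : 0 ≤ (1 / η + 1) ^ κ * y ^ κ := by positivity
    linarith
  · push Not at h
    have h0 : a ≤ 1 / η * y := by
      rw [div_mul_eq_mul_div, le_div_iff₀ hηpos]; linarith
    have h1 : (a + y) ^ κ ≤ ((1 / η + 1) * y) ^ κ :=
      Real.rpow_le_rpow (by positivity) (by linarith) hκ.le
    rw [Real.mul_rpow (by positivity) hy] at h1
    have : 0 ≤ (1 + δ) * a ^ κ := by positivity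
    linarith

lemma h_taylor1 (m : ℝ) (hm : 2 ≤ m) (t : ℝ) :
    |1 + t| ^ m ≤ 1 + m * t + ((1 + m) ^ m + m ^ 2) * (t ^ 2 + |t| ^ m) := by
  have hP : 0 ≤ (1 + m) ^ m := by positivity
  have hT : 0 ≤ |t| ^ m := by positivity
  by_cases h : |m * t| ≤ 1
  · have habs : |t| ≤ 1 := by
      rw [abs_mul, abs_of_pos (by linarith : 0 < m)] at h
      nlinarith [abs_nonneg t]
    have h1t : 0 ≤ 1 + t := by linarith [(abs_le.1 habs).1]
    rw [abs_of_nonneg h1t]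
    have h1 : (1 + t) ^ m ≤ (Real.exp t) ^ m :=
      Real.rpow_le_rpow h1t (by linarith [Real.add_one_le_exp t]) (by linarith)
    rw [← Real.exp_mul] at h1
    have h2 := Real.abs_exp_sub_one_sub_id_le h
    have h3 := (abs_le.1 h2).2
    rw [mul_comm t m] at h1
    have : 0 ≤ (1 + m) ^ m * (t ^ 2 + |t| ^ m) + m ^ 2 * |t| ^ m := by positivity
    nlinarith
  · push Not at h
    rw [abs_mul, abs_of_pos (by linarith : 0 < m)] at h
    have h1 : |1 + t| ≤ (1 + m) * |t| := by
      have := abs_add_le 1 t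
      rw [abs_one] at this
      nlinarith
    have h2 : |1 + t| ^ m ≤ ((1 + m) * |t|) ^ m :=
      Real.rpow_le_rpow (abs_nonneg _) h1 (by linarith)
    rw [Real.mul_rpow (by positivity) (abs_nonneg _)] at h2
    have h3 : -(m ^ 2 * t ^ 2) ≤ m * t := by
      have e1 : t ^ 2 = |t| ^ 2 := (sq_abs t).symm
      have e2 : -(m * |t|) ≤ m * t := by nlinarith [neg_abs_le t]
      have e3 : m * |t| ≤ (m * |t|) * (m * |t|) := by nlinarith [abs_nonneg t]
      rw [e1]; nlinarith
    have : 0 ≤ (1 + m) ^ m * t ^ 2 + m ^ 2 * |t| ^ m := by positivity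
    nlinarith

lemma h_taylor (m : ℝ) (hm : 2 ≤ m) (a h : ℝ) :
    |a + h| ^ m ≤ |a| ^ m + m * |a| ^ (m - 2) * a * h
      + ((1 + m) ^ m + m ^ 2) * (|a| ^ (m - 2) * h ^ 2 + |h| ^ m) := by
  have hP : 0 ≤ (1 + m) ^ m := by positivity
  by_cases ha : a = 0
  · subst ha
    have h1 : 1 ≤ (1 + m) ^ m := Real.one_le_rpow (by linarith) (by linarith)
    have hH : 0 ≤ |h| ^ m := by positivity
    have h0 : |(0:ℝ)| ^ m = 0 := by rw [abs_zero, Real.zero_rpow (by linarith)]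
    rw [h0]
    have hX : 0 ≤ |(0:ℝ)| ^ (m - 2) * h ^ 2 := by positivity
    simp only [zero_add, mul_zero, zero_mul]
    have : 0 ≤ ((1 + m) ^ m + m ^ 2) * (|(0:ℝ)| ^ (m - 2) * h ^ 2) := by positivity
    have : 0 ≤ m ^ 2 * |h| ^ m := by positivity
    nlinarith
  · have hapos : 0 < |a| := abs_pos.2 ha
    have ht := h_taylor1 m hm (h / a)
    have e1 : |a + h| ^ m = |a| ^ m * |1 + h / a| ^ m := by
      rw [← Real.mul_rpow (abs_nonneg _) (abs_nonneg _), ← abs_mul]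
      congr 2; field_simp
    have e2 : |a| ^ m = |a| ^ (m - 2) * a ^ 2 := by
      rw [← sq_abs a, ← Real.rpow_natCast |a| 2, ← Real.rpow_add hapos]; norm_num
    have e3 : |a| ^ m * |h / a| ^ m = |h| ^ m := by
      rw [← Real.mul_rpow (abs_nonneg _) (abs_nonneg _), ← abs_mul]
      congr 2; field_simp
    have e4 : |a| ^ m * (h / a) ^ 2 = |a| ^ (m - 2) * h ^ 2 := by
      rw [e2]; field_simp
    have e5 : |a| ^ m * (h / a) = |a| ^ (m - 2) * a * h := by
      rw [e2]; field_simp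
    rw [e1]
    have h6 := mul_le_mul_of_nonneg_left ht (by positivity : 0 ≤ |a| ^ m)
    refine h6.trans (le_of_eq ?_)
    calc _ = |a| ^ m + m * (|a| ^ m * (h / a)) + ((1 + m) ^ m + m ^ 2) *
        (|a| ^ m * (h / a) ^ 2 + |a| ^ m * |h / a| ^ m) := by ring
      _ = _ := by rw [e3, e4, e5]; ring

lemma h_poly (ω c θ P : ℝ) (hω : 0 ≤ ω) (hc : 0 ≤ c) (hθ : 0 ≤ θ) (hP : θ ≤ P)
    (S n : ℝ) (hS : 0 ≤ S) (hn : 0 ≤ n) (h : S ≤ ω + c * n) :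
    S ^ θ ≤ (1 + ω + c) ^ P * (1 + n ^ P) := by
  have hP0 : 0 ≤ P := hθ.trans hP
  have hb : (1:ℝ) ≤ (1 + ω + c) * max 1 n := by
    have := le_max_left 1 n
    nlinarith
  have h1 : S ^ θ ≤ ((1 + ω + c) * max 1 n) ^ θ := by
    refine Real.rpow_le_rpow hS (h.trans ?_) hθ
    have := le_max_left 1 n
    have := le_max_right 1 n
    nlinarith
  have h2 := Real.rpow_le_rpow_of_exponent_le hb hP
  refine h1.trans (h2.trans ?_)
  rw [Real.mul_rpow (by positivity) (by positivity)]
  refine mul_le_mul_of_nonneg_left ?_ (by positivity)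
  have : 0 ≤ n ^ P := by positivity
  rcases max_cases 1 n with h | h
  · rw [h.1]; simp [this]
  · rw [h.1]; linarith

lemma h_cross (s ρ P ω c δ : ℝ) (hs : 1 ≤ s) (hρ : 0 < ρ) (hρ2 : ρ < 2)
    (hP : (2 * s - ρ) / (2 - ρ) ≤ P) (hω : 0 ≤ ω) (hc : 0 ≤ c) (hδ : 0 < δ) :
    ∃ C : ℝ, 0 ≤ C ∧ ∀ A S n : ℝ, 0 ≤ A → 0 ≤ S → 0 ≤ n → S ≤ ω + c * n →
      A ^ (2 * s - 2) * S ≤ δ * A ^ (2 * s - ρ) + C * (1 + n ^ P) := by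
  have h2ρ : 0 < 2 - ρ := by linarith
  refine ⟨(1 / δ) ^ ((2 * s - 2) / (2 - ρ)) * (1 + ω + c) ^ P, by positivity, ?_⟩
  intro A S n hA hS hn hSn
  have hr : 0 ≤ (1 / δ) ^ ((2 * s - 2) / (2 - ρ)) * (1 + ω + c) ^ P * (1 + n ^ P) := by positivity
  by_cases h : S ≤ δ * A ^ (2 - ρ)
  · have h1 : A ^ (2 * s - 2) * S ≤ A ^ (2 * s - 2) * (δ * A ^ (2 - ρ)) :=
      mul_le_mul_of_nonneg_left h (by positivity)
    have h2 : A ^ (2 * s - ρ) = A ^ (2 * s - 2) * A ^ (2 - ρ) := by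
      rw [← Real.rpow_add_of_nonneg hA (by linarith) h2ρ.le]; ring_nf
    rw [h2]; nlinarith
  · push Not at h
    have h1 : A ^ (2 - ρ) ≤ 1 / δ * S := by
      rw [div_mul_eq_mul_div, le_div_iff₀ hδ]; linarith
    have h2 : A ^ (2 * s - 2) ≤ (1 / δ * S) ^ ((2 * s - 2) / (2 - ρ)) := by
      have := Real.rpow_le_rpow (by positivity) h1
        (by apply div_nonneg <;> linarith : 0 ≤ (2 * s - 2) / (2 - ρ))
      rw [← Real.rpow_mul hA] at this
      rwa [mul_div_cancel₀ _ h2ρ.ne'] at this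
    rw [Real.mul_rpow (by positivity) hS] at h2
    have h3 : S ^ ((2 * s - 2) / (2 - ρ)) * S = S ^ ((2 * s - ρ) / (2 - ρ)) := by
      have e : (2 * s - ρ) / (2 - ρ) = (2 * s - 2) / (2 - ρ) + 1 := by field_simp; ring
      rw [e, Real.rpow_add_of_nonneg hS (by apply div_nonneg <;> linarith) zero_le_one,
        Real.rpow_one]
    have h4 := h_poly ω c ((2 * s - ρ) / (2 - ρ)) P hω hc
      (by apply div_nonneg <;> linarith) hP S n hS hn hSn
    have h5 : 0 ≤ δ * A ^ (2 * s - ρ) := by positivity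
    calc A ^ (2 * s - 2) * S ≤ ((1 / δ) ^ ((2 * s - 2) / (2 - ρ)) *
          S ^ ((2 * s - 2) / (2 - ρ))) * S := mul_le_mul_of_nonneg_right h2 hS
      _ = (1 / δ) ^ ((2 * s - 2) / (2 - ρ)) * S ^ ((2 * s - ρ) / (2 - ρ)) := by
          rw [← h3]; ring
      _ ≤ (1 / δ) ^ ((2 * s - 2) / (2 - ρ)) * ((1 + ω + c) ^ P * (1 + n ^ P)) :=
          mul_le_mul_of_nonneg_left h4 (by positivity)
      _ ≤ _ := by linarith

lemma h_norm_le {d : ℕ} {N : (Fin d → ℝ) → ℝ} (hN : IsVectorNorm N) (x : Fin d → ℝ) :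
    N x ≤ (∑ i, N (Pi.single i 1)) * ‖x‖ := by
  obtain ⟨h0, hz, hs, ht⟩ := hN
  have key : ∀ s : Finset (Fin d), N (∑ i ∈ s, x i • Pi.single i (1:ℝ)) ≤
      ∑ i ∈ s, |x i| * N (Pi.single i 1) := by
    intro s
    induction s using Finset.induction_on with
    | empty => simp [(hz 0).2 rfl]
    | insert a s ha ih =>
      rw [Finset.sum_insert ha, Finset.sum_insert ha]
      refine (ht _ _).trans ?_
      rw [hs]; linarith
  have e : x = ∑ i, x i • Pi.single i (1:ℝ) := by
    ext j; simp [Finset.sum_apply, Pi.single_apply]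
  calc N x = N (∑ i, x i • Pi.single i (1:ℝ)) := by rw [← e]
    _ ≤ _ := key Finset.univ
    _ ≤ ∑ i, ‖x‖ * N (Pi.single i 1) := by
        refine Finset.sum_le_sum fun i _ => mul_le_mul_of_nonneg_right ?_ (h0 _)
        exact norm_le_pi_norm x i
    _ = _ := by rw [← Finset.mul_sum, mul_comm]

lemma h_norm_cont {d : ℕ} {N : (Fin d → ℝ) → ℝ} (hN : IsVectorNorm N) : Continuous N := by
  have hC : 0 ≤ ∑ i, N (Pi.single i 1) := Finset.sum_nonneg fun i _ => hN.1 _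
  have : LipschitzWith (Real.toNNReal (∑ i, N (Pi.single i 1))) N := by
    refine LipschitzWith.of_le_add_mul _ fun x y => ?_
    have h1 := hN.2.2.2 y (x - y)
    rw [add_sub_cancel] at h1
    have h2 := h_norm_le hN (x - y)
    rw [dist_eq_norm, Real.coe_toNNReal _ hC]
    linarith
  exact this.continuous

lemma h_norm_ge {d : ℕ} {N : (Fin d → ℝ) → ℝ} (hN : IsVectorNorm N) :
    ∃ c : ℝ, 0 ≤ c ∧ ∀ x, ‖x‖ ≤ c * N x := by
  by_cases hne : (Metric.sphere (0 : Fin d → ℝ) 1).Nonempty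
  · obtain ⟨y, hy, hmin⟩ := (isCompact_sphere (0 : Fin d → ℝ) 1).exists_isMinOn hne
      (h_norm_cont hN).continuousOn
    have hyn : ‖y‖ = 1 := by simpa using hy
    have hypos : 0 < N y := by
      refine lt_of_le_of_ne (hN.1 y) fun h => ?_
      have := (hN.2.1 y).1 h.symm
      rw [this] at hyn; simp at hyn
    refine ⟨1 / N y, by positivity, fun x => ?_⟩
    by_cases hx : x = 0
    · subst hx; simp [(hN.2.1 0).2 rfl]
    have hxn : 0 < ‖x‖ := norm_pos_iff.2 hx
    have h1 : N y ≤ N (‖x‖⁻¹ • x) := by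
      apply hmin
      simp [norm_smul, hxn.ne']
    rw [hN.2.2.1, abs_of_pos (by positivity)] at h1
    rw [div_mul_eq_mul_div, le_div_iff₀ hypos]
    have := mul_le_mul_of_nonneg_left h1 hxn.le
    rw [← mul_assoc, mul_inv_cancel₀ hxn.ne'] at this
    linarith
  · refine ⟨0, le_rfl, fun x => ?_⟩
    by_cases hx : x = 0
    · simp [hx]
    · exfalso; apply hne
      have hxn : 0 < ‖x‖ := norm_pos_iff.2 hx
      exact ⟨‖x‖⁻¹ • x, by simp [norm_smul, hxn.ne']⟩

lemma h_op_bdd {d : ℕ} {N : (Fin d → ℝ) → ℝ} (hN : IsVectorNorm N)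
    (A : Matrix (Fin d) (Fin d) ℝ) :
    ∃ c : ℝ, 0 ≤ c ∧ ∀ x, N (A.mulVec x) ≤ c * N x := by
  obtain ⟨c, hc, hcx⟩ := h_norm_ge hN
  set K := ∑ i, N (Pi.single i 1)
  have hK : 0 ≤ K := Finset.sum_nonneg fun i _ => hN.1 _
  set L := LinearMap.toContinuousLinearMap (Matrix.toLin' A)
  refine ⟨K * (‖L‖ * c), by positivity, fun x => ?_⟩
  have h1 : ‖A.mulVec x‖ ≤ ‖L‖ * ‖x‖ := by
    have := L.le_opNorm x
    simpa [L] using this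
  calc N (A.mulVec x) ≤ K * ‖A.mulVec x‖ := h_norm_le hN _
    _ ≤ K * (‖L‖ * (c * N x)) := by
        refine mul_le_mul_of_nonneg_left (h1.trans ?_) hK
        exact mul_le_mul_of_nonneg_left (hcx x) (norm_nonneg _)
    _ = _ := by ring

lemma h_op {d : ℕ} {N : (Fin d → ℝ) → ℝ} (hN : IsVectorNorm N)
    (A : Matrix (Fin d) (Fin d) ℝ) (h : inducedMatNorm N A < 1) :
    ∃ l : ℝ, 0 ≤ l ∧ l < 1 ∧ ∀ x, N (A.mulVec x) ≤ l * N x := by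
  obtain ⟨c, hc, hcx⟩ := h_op_bdd hN A
  refine ⟨max 0 (inducedMatNorm N A), le_max_left _ _, max_lt one_pos h, fun x => ?_⟩
  by_cases hx : x = 0
  · subst hx; simp [(hN.2.1 0).2 rfl]
  have hpos : 0 < N x := lt_of_le_of_ne (hN.1 x) fun h => hx ((hN.2.1 x).1 h.symm)
  have h1 : N (A.mulVec ((N x)⁻¹ • x)) ≤ inducedMatNorm N A := by
    apply le_csSup
    · refine ⟨c, ?_⟩
      rintro _ ⟨y, hy, rfl⟩
      have := hcx y
      rwa [hy, mul_one] at this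
    · refine ⟨_, ?_, rfl⟩
      rw [hN.2.2.1, abs_of_pos (by positivity), inv_mul_cancel₀ hpos.ne']
  rw [Matrix.mulVec_smul, hN.2.2.1, abs_of_pos (by positivity)] at h1
  have h2 : N (A.mulVec x) ≤ inducedMatNorm N A * N x := by
    rw [inv_mul_le_iff₀ hpos] at h1; linarith
  exact h2.trans (mul_le_mul_of_nonneg_right (le_max_right _ _) hpos.le)

lemma h_sq_rpow (e P : ℝ) : (e ^ 2) ^ P = |e| ^ (2 * P) := by
  rw [Real.rpow_mul (abs_nonneg _)]
  norm_num

lemma h_lambda_split (q : ℕ) (αc : ℕ → ℝ) (e : ℝ) :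
    lambdaMat q αc e = lambdaMat q αc 0 + e ^ 2 • (lambdaMat q αc 1 - lambdaMat q αc 0) := by
  ext i j
  simp only [lambdaMat, Matrix.of_apply, Matrix.add_apply, Matrix.smul_apply, Matrix.sub_apply]
  split_ifs <;> simp [mul_comm]

lemma h_lambda {q : ℕ} {αc : ℕ → ℝ} {με : Measure ℝ} {b s₀ : ℝ} {Nb : (Fin q → ℝ) → ℝ}
    (hprob : IsProbabilityMeasure με) (hP : 0 < b * s₀) (h : Assump4 q αc με b s₀ Nb) :
    ∃ μ : ℝ, 0 ≤ μ ∧ μ < 1 ∧ ∀ x : Fin q → ℝ,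
      Integrable (fun e => Nb ((lambdaMat q αc e).mulVec x) ^ (b * s₀)) με ∧
      ∫ e, Nb ((lambdaMat q αc e).mulVec x) ^ (b * s₀) ∂με ≤ μ * Nb x ^ (b * s₀) := by
  obtain ⟨hN, hmon, hint, hsup⟩ := h
  set P := b * s₀ with hPdef
  have hint' : Integrable (fun e : ℝ => (e ^ 2) ^ P) με := by
    simp_rw [h_sq_rpow]
    rwa [hPdef, ← mul_assoc]
  obtain ⟨c0, hc0, h0⟩ := h_op_bdd hN (lambdaMat q αc 0)
  obtain ⟨c1, hc1, h1⟩ := h_op_bdd hN (lambdaMat q αc 1 - lambdaMat q αc 0)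
  have hpt : ∀ (x : Fin q → ℝ) (e : ℝ), Nb ((lambdaMat q αc e).mulVec x) ^ P ≤
      (1 + c0 + c1) ^ P * (1 + (e ^ 2) ^ P) * Nb x ^ P := by
    intro x e
    have h2 : Nb ((lambdaMat q αc e).mulVec x) ≤ (c0 + c1 * e ^ 2) * Nb x := by
      rw [h_lambda_split, Matrix.add_mulVec, Matrix.smul_mulVec]
      refine (hN.2.2.2 _ _).trans ?_
      rw [hN.2.2.1, abs_of_nonneg (sq_nonneg e)]
      have := mul_le_mul_of_nonneg_left (h1 x) (sq_nonneg e)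
      linarith [h0 x]
    have h3 := Real.rpow_le_rpow (hN.1 _) h2 hP.le
    rw [Real.mul_rpow (by positivity) (hN.1 _)] at h3
    have h4 := h_poly c0 c1 P P hc0 hc1 hP.le le_rfl (c0 + c1 * e ^ 2) (e ^ 2)
      (by positivity) (sq_nonneg e) le_rfl
    exact h3.trans (mul_le_mul_of_nonneg_right h4 (Real.rpow_nonneg (hN.1 _) _))
  have hdom : ∀ x : Fin q → ℝ, Integrable
      (fun e : ℝ => (1 + c0 + c1) ^ P * (1 + (e ^ 2) ^ P) * Nb x ^ P) με := fun x =>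
    (((integrable_const (1:ℝ)).add hint').const_mul _).mul_const _
  have hI : ∀ x : Fin q → ℝ,
      Integrable (fun e => Nb ((lambdaMat q αc e).mulVec x) ^ P) με := by
    intro x
    refine (hdom x).mono' ?_ ?_
    · apply Continuous.aestronglyMeasurable
      apply Continuous.rpow_const
      · refine (h_norm_cont hN).comp ?_
        have : (fun e => (lambdaMat q αc e).mulVec x) = fun e =>
            (lambdaMat q αc 0).mulVec x +
              e ^ 2 • (lambdaMat q αc 1 - lambdaMat q αc 0).mulVec x := by
          funext e
          rw [h_lambda_split, Matrix.add_mulVec, Matrix.smul_mulVec]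
        rw [this]; fun_prop
      · intro e; right; exact hP.le
    · refine Eventually.of_forall fun e => ?_
      rw [Real.norm_of_nonneg (Real.rpow_nonneg (hN.1 _) _)]
      exact hpt x e
  set T := {c : ℝ | ∃ x : Fin q → ℝ, Nb x = 1 ∧
    c = (∫ e, Nb ((lambdaMat q αc e).mulVec x) ^ P ∂με) ^ (1 / P)} with hT
  have hnn : ∀ x : Fin q → ℝ, 0 ≤ ∫ e, Nb ((lambdaMat q αc e).mulVec x) ^ P ∂με := fun x =>
    integral_nonneg fun e => Real.rpow_nonneg (hN.1 _) _
  have hbdd : BddAbove T := by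
    refine ⟨(∫ e, (1 + c0 + c1) ^ P * (1 + (e ^ 2) ^ P) * 1 ∂με) ^ (1 / P), ?_⟩
    rintro _ ⟨y, hy, rfl⟩
    refine Real.rpow_le_rpow (hnn y) ?_ (by positivity)
    have := hdom y
    rw [hy, Real.one_rpow] at this
    refine integral_mono (hI y) this fun e => ?_
    have := hpt y e
    rwa [hy, Real.one_rpow] at this
  refine ⟨(max 0 (sSup T)) ^ P, by positivity,
    Real.rpow_lt_one (le_max_left _ _) (max_lt one_pos hsup) hP, fun x => ⟨hI x, ?_⟩⟩
  by_cases hx : x = 0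
  · subst hx
    simp [(hN.2.1 0).2 rfl, Real.zero_rpow hP.ne']
  have hpos : 0 < Nb x := lt_of_le_of_ne (hN.1 x) fun h => hx ((hN.2.1 x).1 h.symm)
  have hmem : (∫ e, Nb ((lambdaMat q αc e).mulVec ((Nb x)⁻¹ • x)) ^ P ∂με) ^ (1 / P) ∈ T := by
    refine ⟨_, ?_, rfl⟩
    rw [hN.2.2.1, abs_of_pos (by positivity), inv_mul_cancel₀ hpos.ne']
  have h5 := (le_csSup hbdd hmem).trans (le_max_right 0 (sSup T))
  have h6 := Real.rpow_le_rpow (Real.rpow_nonneg (hnn _) _) h5 hP.le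
  rw [← Real.rpow_mul (hnn _), one_div_mul_cancel hP.ne', Real.rpow_one] at h6
  have h7 : ∀ e, Nb ((lambdaMat q αc e).mulVec ((Nb x)⁻¹ • x)) ^ P =
      ((Nb x) ^ P)⁻¹ * Nb ((lambdaMat q αc e).mulVec x) ^ P := by
    intro e
    rw [Matrix.mulVec_smul, hN.2.2.1, abs_of_pos (by positivity),
      Real.mul_rpow (by positivity) (hN.1 _), Real.inv_rpow hpos.le]
  simp_rw [h7] at h6
  rw [integral_const_mul, inv_mul_le_iff₀ (by positivity)] at h6
  linarith

lemma h_sum_fin (n : ℕ) (f : ℕ → ℝ) :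
    ∑ j : Fin n, f ((j : ℕ) + 1) = ∑ i ∈ Finset.Icc 1 n, f i := by
  induction n with
  | zero => simp
  | succ n ih =>
    rw [Fin.sum_univ_castSucc, Finset.sum_Icc_succ_top (by omega), ← ih]
    simp

section struct
variable (p q : ℕ) (πc : ℕ → ℝ) (g : ℝ → ℝ) (ω : ℝ) (αc : ℕ → ℝ)
    (ζ : ℕ → (Fin (p + q) → ℝ) → ℝ) (x : Fin (p + q) → ℝ) (e : ℝ)

lemma h_coord_succ (i : ℕ) (hi : i + 1 < p + q) :
    coordVal (oneStep p q πc g ω αc ζ x e) (i + 1) = coordVal x i := by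
  conv_lhs => unfold coordVal
  rw [dif_pos hi]
  simp [oneStep]

lemma h_coord_zero (hi : 0 < p + q) :
    coordVal (oneStep p q πc g ω αc ζ x e) 0 =
      (∑ k ∈ Finset.Icc 1 (p - 1), πc k * coordVal x (k - 1)) + g (z1 p q πc x)
        + Real.sqrt (sigma2 p q πc g ω αc ζ x) * e := by
  conv_lhs => unfold coordVal
  rw [dif_pos hi]
  simp [oneStep]

lemma h_u_zero (hp : 1 ≤ p) :
    uLag p q πc (oneStep p q πc g ω αc ζ x e) 0 =
      g (z1 p q πc x) + Real.sqrt (sigma2 p q πc g ω αc ζ x) * e := by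
  unfold uLag
  rw [h_coord_zero _ _ _ _ _ _ _ _ _ (by omega)]
  have : ∑ i ∈ Finset.Icc 1 (p - 1), πc i * coordVal (oneStep p q πc g ω αc ζ x e) (0 + i) =
      ∑ k ∈ Finset.Icc 1 (p - 1), πc k * coordVal x (k - 1) := by
    refine Finset.sum_congr rfl fun i hi => ?_
    rw [Finset.mem_Icc] at hi
    obtain ⟨k, rfl⟩ : ∃ k, i = k + 1 := ⟨i - 1, by omega⟩
    rw [zero_add, h_coord_succ _ _ _ _ _ _ _ _ _ _ (by omega)]
    simp
  rw [this]; ring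

lemma h_u_succ (hp : 1 ≤ p) (j : ℕ) (hj : j < q) :
    uLag p q πc (oneStep p q πc g ω αc ζ x e) (j + 1) = uLag p q πc x j := by
  unfold uLag
  rw [h_coord_succ _ _ _ _ _ _ _ _ _ _ (by omega)]
  congr 1
  refine Finset.sum_congr rfl fun i hi => ?_
  rw [Finset.mem_Icc] at hi
  rw [add_right_comm, h_coord_succ _ _ _ _ _ _ _ _ _ _ (by omega)]

lemma h_e_zero (hp : 1 ≤ p) (hq : 1 ≤ q) :
    eLag p q πc g (oneStep p q πc g ω αc ζ x e) 0 =
      Real.sqrt (sigma2 p q πc g ω αc ζ x) * e := by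
  unfold eLag
  rw [h_u_zero _ _ _ _ _ _ _ _ _ hp, h_u_succ _ _ _ _ _ _ _ _ _ hp _ (by omega)]
  unfold z1; ring

lemma h_e_succ (hp : 1 ≤ p) (j : ℕ) (hj : j + 1 < q) :
    eLag p q πc g (oneStep p q πc g ω αc ζ x e) (j + 1) = eLag p q πc g x j := by
  unfold eLag
  rw [h_u_succ _ _ _ _ _ _ _ _ _ hp _ (by omega), h_u_succ _ _ _ _ _ _ _ _ _ hp _ (by omega)]

lemma h_z2 : z2 p q (oneStep p q πc g ω αc ζ x e) =
    (piMatOne p πc).mulVec (z2 p q x) +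
      (z1 p q πc x) • (fun i : Fin (p - 1) => if (i : ℕ) = 0 then (1:ℝ) else 0) := by
  ext i
  have hi := i.2
  simp only [Pi.add_apply, Pi.smul_apply, smul_eq_mul, Matrix.mulVec, dotProduct]
  have hl : z2 p q (oneStep p q πc g ω αc ζ x e) i = coordVal x i := by
    unfold z2
    exact h_coord_succ _ _ _ _ _ _ _ _ _ _ (by omega)
  rw [hl]
  by_cases h0 : (i : ℕ) = 0
  · simp only [piMatOne, Matrix.of_apply, h0, if_true, z2]
    rw [h_sum_fin (p - 1) (fun k => πc k * coordVal x k)]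
    simp [z1, uLag]
  · simp only [piMatOne, Matrix.of_apply, h0, if_false, z2]
    rw [Finset.sum_eq_single (⟨(i : ℕ) - 1, by omega⟩ : Fin (p - 1))]
    · have : (i : ℕ) = (i : ℕ) - 1 + 1 := by omega
      simp [← this]
    · intro j _ hj
      rw [if_neg, zero_mul]
      intro h; apply hj; ext; simp; omega
    · simp

lemma h_sigma_nonneg (hA3 : Assump3 p q ω αc ζ) : 0 ≤ sigma2 p q πc g ω αc ζ x := by
  obtain ⟨hω, hα, -, hζ⟩ := hA3
  unfold sigma2
  refine add_nonneg (mul_nonneg (hζ 0 (by omega) x).1.le hω.le) (Finset.sum_nonneg fun i hi => ?_)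
  rw [Finset.mem_Icc] at hi
  exact mul_nonneg (mul_nonneg (hα i hi.1 hi.2) (hζ i hi.2 x).1.le) (sq_nonneg _)

lemma h_sigma_le (hA3 : Assump3 p q ω αc ζ) : sigma2 p q πc g ω αc ζ x ≤
    ω + ∑ j : Fin q, αc ((j : ℕ) + 1) * xiVec p q πc g x j := by
  obtain ⟨hω, hα, -, hζ⟩ := hA3
  unfold sigma2 xiVec
  have := h_sum_fin q (fun i => αc i * (eLag p q πc g x (i - 1)) ^ 2)
  simp only [Nat.add_sub_cancel] at this
  rw [this]
  refine add_le_add ?_ (Finset.sum_le_sum fun i hi => ?_)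
  · have := (hζ 0 (by omega) x).2
    nlinarith
  · rw [Finset.mem_Icc] at hi
    refine mul_le_mul_of_nonneg_right ?_ (sq_nonneg _)
    have := (hζ i hi.2 x).2
    nlinarith [hα i hi.1 hi.2]

lemma h_xi (hp : 1 ≤ p) (hq : 1 ≤ q) (hA3 : Assump3 p q ω αc ζ) {Nb : (Fin q → ℝ) → ℝ}
    (hN : IsVectorNorm Nb) (hmon : IsMonotoneNorm Nb) :
    Nb (xiVec p q πc g (oneStep p q πc g ω αc ζ x e)) ≤
      Nb ((lambdaMat q αc e).mulVec (xiVec p q πc g x)) +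
        ω * e ^ 2 * Nb (fun i : Fin q => if (i : ℕ) = 0 then (1:ℝ) else 0) := by
  have hω := hA3.1
  have h1 : Nb (xiVec p q πc g (oneStep p q πc g ω αc ζ x e)) ≤
      Nb ((lambdaMat q αc e).mulVec (xiVec p q πc g x) +
        (ω * e ^ 2) • (fun i : Fin q => if (i : ℕ) = 0 then (1:ℝ) else 0)) := by
    refine hmon _ _ fun i => ?_
    have hnn : 0 ≤ xiVec p q πc g (oneStep p q πc g ω αc ζ x e) i := sq_nonneg _
    rw [abs_of_nonneg hnn]
    refine le_trans ?_ (le_abs_self _)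
    simp only [Pi.add_apply, Pi.smul_apply, smul_eq_mul, Matrix.mulVec, dotProduct]
    by_cases h0 : (i : ℕ) = 0
    · simp only [lambdaMat, Matrix.of_apply, h0, if_true, mul_one]
      have : xiVec p q πc g (oneStep p q πc g ω αc ζ x e) i =
          sigma2 p q πc g ω αc ζ x * e ^ 2 := by
        unfold xiVec
        rw [h0, h_e_zero _ _ _ _ _ _ _ _ _ hp hq, mul_pow,
          Real.sq_sqrt (h_sigma_nonneg _ _ _ _ _ _ _ _ hA3)]
      rw [this]
      have h2 := mul_le_mul_of_nonneg_right (h_sigma_le p q πc g ω αc ζ x hA3) (sq_nonneg e)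
      refine h2.trans (le_of_eq ?_)
      rw [add_mul, Finset.sum_mul, add_comm]
      congr 1
      exact Finset.sum_congr rfl fun j _ => by ring
    · simp only [lambdaMat, Matrix.of_apply, h0, if_false, mul_zero, add_zero]
      have hi := i.2
      rw [Finset.sum_eq_single (⟨(i : ℕ) - 1, by omega⟩ : Fin q)]
      · have h3 : (i : ℕ) = (i : ℕ) - 1 + 1 := by omega
        rw [if_pos h3, one_mul]
        unfold xiVec
        have h4 := h_e_succ p q πc g ω αc ζ x e hp ((i : ℕ) - 1) (by omega)
        rw [← h3] at h4
        rw [h4]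
      · intro j _ hj
        rw [if_neg, zero_mul]
        intro h; apply hj; ext; simp; omega
      · simp
  refine h1.trans ((hN.2.2.2 _ _).trans ?_)
  rw [hN.2.2.1, abs_of_nonneg (by positivity)]

lemma h_sigma_lin (hA3 : Assump3 p q ω αc ζ) {Nb : (Fin q → ℝ) → ℝ}
    (hN : IsVectorNorm Nb) : ∃ c : ℝ, 0 ≤ c ∧ ∀ x,
    sigma2 p q πc g ω αc ζ x ≤ ω + c * Nb (xiVec p q πc g x) := by
  obtain ⟨c, hc, hcx⟩ := h_norm_ge hN
  have hα : ∀ j : Fin q, 0 ≤ αc ((j : ℕ) + 1) := fun j => hA3.2.1 _ (by omega) (by omega)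
  refine ⟨(∑ j : Fin q, αc ((j : ℕ) + 1)) * c,
    mul_nonneg (Finset.sum_nonneg fun j _ => hα j) hc, fun x => ?_⟩
  refine (h_sigma_le p q πc g ω αc ζ x hA3).trans ?_
  rw [mul_assoc, Finset.sum_mul]
  refine add_le_add le_rfl (Finset.sum_le_sum fun j _ => mul_le_mul_of_nonneg_left ?_ (hα j))
  exact (le_abs_self _).trans ((norm_le_pi_norm _ j).trans (hcx _))

end struct

lemma h_intbound (με : Measure ℝ) (hprob : IsProbabilityMeasure με) (m k : ℝ)
    (h1 : Integrable (fun e : ℝ => e) με) (h1' : ∫ e, e ∂με = 0)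
    (h2 : Integrable (fun e : ℝ => e ^ 2) με) (h2' : ∫ e, e ^ 2 ∂με = 1)
    (h3 : Integrable (fun e : ℝ => |e| ^ m) με) (h5 : Integrable (fun e : ℝ => |e| ^ k) με)
    (F L : ℝ → ℝ) (h4 : Integrable L με) (a0 a1 a2 a3 a4 a5 : ℝ) (hF0 : ∀ e, 0 ≤ F e)
    (hF : ∀ e, F e ≤ a0 + a1 * e + a2 * e ^ 2 + a3 * |e| ^ m + a4 * L e + a5 * |e| ^ k) :
    ∫ e, F e ∂με ≤ a0 + a2 + a3 * ∫ e, |e| ^ m ∂με + a4 * ∫ e, L e ∂με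
      + a5 * ∫ e, |e| ^ k ∂με := by
  have i0 : Integrable (fun _ : ℝ => a0) με := integrable_const _
  have i1 := i0.add (h1.const_mul a1)
  have i2 := i1.add (h2.const_mul a2)
  have i3 := i2.add (h3.const_mul a3)
  have i4 := i3.add (h4.const_mul a4)
  have i5 := i4.add (h5.const_mul a5)
  refine (integral_mono_of_nonneg (Eventually.of_forall hF0) i5
    (Eventually.of_forall hF)).trans (le_of_eq ?_)
  rw [integral_add' i4 (h5.const_mul a5), integral_add' i3 (h4.const_mul a4),
    integral_add' i2 (h3.const_mul a3), integral_add' i1 (h2.const_mul a2),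
    integral_add' i0 (h1.const_mul a1)]
  have j1 : ∫ a, a1 * a ∂με = 0 := by
    rw [integral_const_mul a1 (fun a : ℝ => a), h1', mul_zero]
  rw [j1]
  simp only [integral_const_mul, h2', integral_const, probReal_univ]
  simp

lemma h_assemble {ι : Type*} (Z W X E : ι → ℝ) (α s₁ s₂ a C : ℝ)
    (hZ : ∀ x, 0 ≤ Z x) (hW : ∀ x, 0 ≤ W x) (hX : ∀ x, 0 ≤ X x)
    (hα0 : 0 < α) (hα1 : α ≤ 1) (hs₁ : 0 < s₁) (hs₂ : 0 < s₂) (ha : 0 < a)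
    (h : ∀ x, E x ≤ 1 + Z x + s₁ * W x + s₂ * X x
      - a * (Z x ^ α + s₁ * W x + s₂ * X x) + C) :
    ∃ et : ℝ, 0 < et ∧ ∃ N : ℕ, 1 ≤ N ∧ ∃ bt : ℝ, ∀ x,
      (E x ≤ (1 + Z x + s₁ * W x + s₂ * X x)
        - et * (1 + Z x + s₁ * W x + s₂ * X x) ^ α + bt) ∧
      (¬ (Z x ≤ N ∧ W x ≤ N ∧ X x ^ α ≤ N) → E x ≤ (1 + Z x + s₁ * W x + s₂ * X x)
        - et * (1 + Z x + s₁ * W x + s₂ * X x) ^ α) := by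
  set B := max 0 (C + a / 2)
  have hB0 : 0 ≤ B := le_max_left _ _
  have hB1 : C + a / 2 ≤ B := le_max_right _ _
  have hcast : Tendsto (fun n : ℕ => (n : ℝ)) atTop atTop := tendsto_natCast_atTop_atTop
  have t1 : ∀ᶠ n : ℕ in atTop, B / (a / 2) ≤ (n : ℝ) ^ α :=
    ((tendsto_rpow_atTop hα0).comp hcast).eventually_ge_atTop _
  have t2 : ∀ᶠ n : ℕ in atTop, B / (a / 2) / s₁ ≤ (n : ℝ) := hcast.eventually_ge_atTop _
  have t3 : ∀ᶠ n : ℕ in atTop, B / (a / 2) / s₂ + 1 ≤ (n : ℝ) := hcast.eventually_ge_atTop _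
  obtain ⟨N, n1, n2, n3, n4⟩ := (t1.and (t2.and (t3.and (eventually_ge_atTop 1)))).exists
  refine ⟨a / 2, by positivity, N, n4, B, fun x => ?_⟩
  have hx := h x
  have z := hZ x
  have w := hW x
  have xx := hX x
  have hzα : 0 ≤ Z x ^ α := by positivity
  have hw' : 0 ≤ s₁ * W x := by positivity
  have hx' : 0 ≤ s₂ * X x := by positivity
  have hV : (1 + Z x + s₁ * W x + s₂ * X x) ^ α ≤ Z x ^ α + (1 + s₁ * W x + s₂ * X x) := by
    have e1 : 1 + Z x + s₁ * W x + s₂ * X x = Z x + (1 + s₁ * W x + s₂ * X x) := by ring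
    rw [e1]
    refine (Real.rpow_add_le_add_rpow z (by positivity) hα0.le hα1).trans ?_
    have e2 : (1 + s₁ * W x + s₂ * X x) ^ α ≤ (1 + s₁ * W x + s₂ * X x) ^ (1:ℝ) :=
      Real.rpow_le_rpow_of_exponent_le (by linarith) hα1
    rw [Real.rpow_one] at e2
    linarith
  have hmain : E x ≤ (1 + Z x + s₁ * W x + s₂ * X x)
      - a / 2 * (1 + Z x + s₁ * W x + s₂ * X x) ^ α + B
      - a / 2 * (Z x ^ α + s₁ * W x + s₂ * X x) := by
    have := mul_le_mul_of_nonneg_left hV (by positivity : 0 ≤ a / 2)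
    nlinarith
  constructor
  · have : 0 ≤ a / 2 * (Z x ^ α + s₁ * W x + s₂ * X x) := by positivity
    linarith
  · intro hn
    have key : B / (a / 2) ≤ Z x ^ α + s₁ * W x + s₂ * X x := by
      by_cases c1 : Z x ≤ N
      · by_cases c2 : W x ≤ N
        · have c3 : ¬ X x ^ α ≤ N := fun c3 => hn ⟨c1, c2, c3⟩
          push Not at c3
          have e3 : X x ^ α ≤ 1 + X x := by
            calc X x ^ α ≤ (1 + X x) ^ α := Real.rpow_le_rpow xx (by linarith) hα0.le
              _ ≤ (1 + X x) ^ (1:ℝ) := Real.rpow_le_rpow_of_exponent_le (by linarith) hα1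
              _ = _ := Real.rpow_one _
          have e4 : B / (a / 2) / s₂ ≤ X x := by linarith
          rw [div_le_iff₀ hs₂] at e4
          linarith
        · push Not at c2
          have e4 : B / (a / 2) / s₁ ≤ W x := by linarith
          rw [div_le_iff₀ hs₁] at e4
          linarith
      · push Not at c1
        have e4 : (N : ℝ) ^ α ≤ Z x ^ α := Real.rpow_le_rpow (by positivity) c1.le hα0.le
        linarith
    rw [div_le_iff₀ (by positivity)] at key
    linarith

lemma h_delta (L : ℝ) (h0 : 0 ≤ L) (h1 : L < 1) : ∃ δ : ℝ, 0 < δ ∧ (1 + δ) * L < 1 :=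
  ⟨(1 - L) / 2, by linarith, by nlinarith⟩

lemma h_g {g : ℝ → ℝ} {r M₀ K₀ ρ m : ℝ} (h : Assump2ii g r M₀ K₀ ρ) (hm : 2 ≤ m) (u : ℝ) :
    |g u| ^ m ≤ |u| ^ m - r * |u| ^ (m - ρ) + (K₀ ^ m + r * M₀ ^ (m - ρ)) ∧
    |g u| ^ (m - ρ) ≤ |u| ^ (m - ρ) + K₀ ^ (m - ρ) := by
  obtain ⟨-, -, -, hr, hM, hK, hρ, hρ2, hbig, hsmall⟩ := h
  have hκ : 0 < m - ρ := by linarith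
  have p1 : 0 ≤ K₀ ^ m := by positivity
  have p2 : 0 ≤ K₀ ^ (m - ρ) := by positivity
  have p3 : 0 ≤ r * M₀ ^ (m - ρ) := by positivity
  have p4 : 0 ≤ |u| ^ m := by positivity
  have p5 : 0 ≤ |u| ^ (m - ρ) := by positivity
  rcases le_total M₀ |u| with hu | hu
  · have hupos : 0 < |u| := by linarith
    have hb := hbig u hu
    set t := 1 - r * |u| ^ (-ρ) with ht
    have ht0 : 0 ≤ t := by
      by_contra hneg
      push Not at hneg
      nlinarith [abs_nonneg (g u)]
    have ht1 : t ≤ 1 := by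
      have : 0 ≤ r * |u| ^ (-ρ) := by positivity
      linarith
    constructor
    · have e1 : |g u| ^ m ≤ t ^ m * |u| ^ m := by
        rw [← Real.mul_rpow ht0 (abs_nonneg _)]
        exact Real.rpow_le_rpow (abs_nonneg _) hb (by linarith)
      have e2 : t ^ m ≤ t := by
        have := Real.rpow_le_rpow_of_exponent_ge' ht0 ht1 zero_le_one (by linarith : 1 ≤ m)
        rwa [Real.rpow_one] at this
      have e3 : t * |u| ^ m = |u| ^ m - r * |u| ^ (m - ρ) := by
        rw [sub_eq_add_neg m ρ, Real.rpow_add hupos, ht]; ring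
      have := mul_le_mul_of_nonneg_right e2 p4
      linarith
    · have e1 : |g u| ≤ |u| := by nlinarith
      have := Real.rpow_le_rpow (abs_nonneg _) e1 hκ.le
      linarith
  · have hs := hsmall u hu
    have e1 := Real.rpow_le_rpow (abs_nonneg _) hs (by linarith : 0 ≤ m)
    have e2 := Real.rpow_le_rpow (abs_nonneg _) hs hκ.le
    have e3 := mul_le_mul_of_nonneg_left (Real.rpow_le_rpow (abs_nonneg _) hu hκ.le) hr.le
    constructor <;> linarith

lemma h_integrable_pow {με : Measure ℝ} (hprob : IsProbabilityMeasure με) (k θ : ℝ)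
    (hθ : 0 ≤ θ) (hk : θ ≤ k) (h : Integrable (fun e : ℝ => |e| ^ k) με) :
    Integrable (fun e : ℝ => |e| ^ θ) με := by
  refine ((integrable_const (1:ℝ)).add h).mono' ?_ (Eventually.of_forall fun e => ?_)
  · exact (continuous_abs.rpow_const fun _ => Or.inr hθ).aestronglyMeasurable
  · rw [Real.norm_of_nonneg (by positivity)]
    simp only [Pi.add_apply]
    have hk0 : 0 ≤ |e| ^ k := by positivity
    rcases le_total |e| 1 with h1 | h1
    · have := Real.rpow_le_one (abs_nonneg e) h1 hθ
      linarith
    · have := Real.rpow_le_rpow_of_exponent_le h1 hk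
      linarith

set_option maxHeartbeats 2000000 in
open MeasureTheory Filter in
/-- under Assumptions 1–4 there are s₁, s₂, ẽ > 0, an integer N ≥ 1 and
b̃ < ∞ such that the drift function V satisfies Condition D:
E[V(Y₁) | Y₀ = x] ≤ V(x) − ẽV(x)^α + b̃1_{A_N}(x) for every x ∈ ℝ^{p+q}, where
A_N = {x : |z₁(x₁)|^{2s₀} ≤ N, ‖z₂(x₁)‖_*^{2s₀α} ≤ N, ‖ξ(x)‖_•^{bs₀α} ≤ N}. -/
theorem stmt_14 (p q : ℕ) (hp : 1 ≤ p) (hq : 1 ≤ q)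
    (πc : ℕ → ℝ) (g : ℝ → ℝ) (ω : ℝ) (αc : ℕ → ℝ)
    (ζ : ℕ → (Fin (p + q) → ℝ) → ℝ) (με : Measure ℝ)
    (r M₀ K₀ ρ s₀ b : ℝ)
    (Nstar : (Fin (p - 1) → ℝ) → ℝ) (Nb : (Fin q → ℝ) → ℝ)
    (hζmeas : ∀ i, Measurable (ζ i))
    (hA1 : Assump1 με)
    (hA2i : Assump2i p πc)
    (hA2ii : Assump2ii g r M₀ K₀ ρ)
    (hA3 : Assump3 p q ω αc ζ)
    (hconst : ConstsOK s₀ b ρ)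
    (hNstar : IsVectorNorm Nstar)
    (hNstarop : inducedMatNorm Nstar (piMatOne p πc) < 1)
    (hA4 : Assump4 q αc με b s₀ Nb) :
    ∃ s₁ : ℝ, 0 < s₁ ∧ ∃ s₂ : ℝ, 0 < s₂ ∧ ∃ et : ℝ, 0 < et ∧
    ∃ N : ℕ, 1 ≤ N ∧ ∃ bt : ℝ,
      ∀ x : Fin (p + q) → ℝ,
        (∫ e, Vfun p q πc g s₁ s₂ s₀ b (1 - ρ / (2 * s₀)) Nstar Nb
            (oneStep p q πc g ω αc ζ x e) ∂με)
          ≤ Vfun p q πc g s₁ s₂ s₀ b (1 - ρ / (2 * s₀)) Nstar Nb x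
            - et * (Vfun p q πc g s₁ s₂ s₀ b (1 - ρ / (2 * s₀)) Nstar Nb x)
                ^ (1 - ρ / (2 * s₀))
            + Set.indicator
                {y : Fin (p + q) → ℝ |
                  |z1 p q πc y| ^ (2 * s₀) ≤ (N : ℝ) ∧
                  Nstar (z2 p q y) ^ (2 * s₀ * (1 - ρ / (2 * s₀))) ≤ (N : ℝ) ∧
                  Nb (xiVec p q πc g y) ^ (b * s₀ * (1 - ρ / (2 * s₀))) ≤ (N : ℝ)}
                (fun _ => bt) x := by
  obtain ⟨hprob, hmean, hvar, -⟩ := hA1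
  obtain ⟨hs, hb, hb1, hb2⟩ := hconst
  have hr : 0 < r := hA2ii.2.2.2.1
  have hK₀ : 0 < K₀ := hA2ii.2.2.2.2.2.1
  have hρ : 0 < ρ := hA2ii.2.2.2.2.2.2.1
  have hρ2 : ρ < 2 := hA2ii.2.2.2.2.2.2.2.1
  have hω : 0 < ω := hA3.1
  obtain ⟨hNb, hmon, hint, -⟩ := id hA4
  have hPpos : 0 < b * s₀ := by positivity
  have hsP : s₀ ≤ b * s₀ := by nlinarith
  have hexp : (2 * s₀ - ρ) / (2 - ρ) ≤ b * s₀ := by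
    rcases hs.eq_or_lt with h | h
    · have := hb1 h.symm
      subst this
      rw [← h]
      simp [div_self (by linarith : (2:ℝ) - ρ ≠ 0)]
    · have := hb2 h
      rw [div_lt_iff₀ (mul_pos (by linarith) (by linarith))] at this
      rw [div_le_iff₀ (by linarith)]
      linarith
  have hκeq : 2 * s₀ * (1 - ρ / (2 * s₀)) = 2 * s₀ - ρ := by field_simp
  have hκ : 0 < 2 * s₀ - ρ := by linarith
  have hα0 : 0 < 1 - ρ / (2 * s₀) := by
    rw [sub_pos, div_lt_one (by linarith)]; linarith
  have hα1 : 1 - ρ / (2 * s₀) ≤ 1 := by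
    have : 0 ≤ ρ / (2 * s₀) := by positivity
    linarith
  set P := b * s₀ with hP
  -- moments
  have hk : Integrable (fun e : ℝ => |e| ^ (2 * P)) με := by
    have e1 : 2 * P = 2 * b * s₀ := by rw [hP]; ring
    rwa [e1]
  have hI3 : Integrable (fun e : ℝ => |e| ^ (2 * s₀)) με :=
    h_integrable_pow hprob (2 * P) (2 * s₀) (by linarith) (by linarith) hk
  have hI2 : Integrable (fun e : ℝ => e ^ 2) με := by
    have := h_integrable_pow hprob (2 * P) 2 (by norm_num) (by linarith) hk
    simpa using this
  have hI1 : Integrable (fun e : ℝ => e) με := by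
    have := h_integrable_pow hprob (2 * P) 1 (by norm_num) (by linarith) hk
    simp only [Real.rpow_one] at this
    exact (integrable_norm_iff measurable_id.aestronglyMeasurable).1 this
  set M1 := ∫ e, |e| ^ (2 * s₀) ∂με with hM1
  set M2 := ∫ e, |e| ^ (2 * P) ∂με with hM2
  have hM1n : 0 ≤ M1 := integral_nonneg fun e => by positivity
  have hM2n : 0 ≤ M2 := integral_nonneg fun e => by positivity
  -- constants
  obtain ⟨μ, hμ0, hμ1, hμ⟩ := h_lambda hprob hPpos hA4
  obtain ⟨l, hl0, hl1, hl⟩ := h_op hNstar _ hNstarop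
  obtain ⟨c, hc, hσ⟩ := h_sigma_lin p q πc g ω αc ζ hA3 hNb
  obtain ⟨δ2, hδ2, hν1⟩ := h_delta μ hμ0 hμ1
  obtain ⟨C4, hC4, hsplit4⟩ := h_pow_split P δ2 hPpos hδ2
  obtain ⟨δ3, hδ3, hl1'⟩ := h_delta (l ^ (2 * s₀ - ρ)) (by positivity)
    (Real.rpow_lt_one hl0 hl1 hκ)
  obtain ⟨C5, hC5, hsplit5⟩ := h_pow_split (2 * s₀ - ρ) δ3 hκ hδ3
  set ν := (1 + δ2) * μ with hν
  set l' := (1 + δ3) * l ^ (2 * s₀ - ρ) with hl'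
  set cι := Nstar (fun i : Fin (p - 1) => if (i : ℕ) = 0 then (1:ℝ) else 0) with hcι
  have hcι0 : 0 ≤ cι := hNstar.1 _
  set nι := Nb (fun i : Fin q => if (i : ℕ) = 0 then (1:ℝ) else 0) with hnι
  have hnι0 : 0 ≤ nι := hNb.1 _
  set CT := (1 + 2 * s₀) ^ (2 * s₀) + (2 * s₀) ^ 2 with hCT
  have hCT0 : 0 < CT := by positivity
  obtain ⟨Ccr, hCcr, hcross⟩ := h_cross s₀ ρ P ω c (r / (4 * CT)) hs hρ hρ2 hexp hω.le hc
    (by positivity)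
  set CS := (1 + ω + c) ^ P with hCS
  have hCS0 : 0 ≤ CS := by positivity
  set C2 := C5 * cι ^ (2 * s₀ - ρ) with hC2
  have hC20 : 0 ≤ C2 := by positivity
  set C3 := CT * (Ccr + CS * M1) with hC3
  have hC30 : 0 ≤ C3 := by positivity
  set s₁ := r / (4 * (C2 + 1)) with hs₁
  have hs₁0 : 0 < s₁ := by positivity
  set s₂ := 2 * C3 / (1 - ν) + 1 with hs₂
  have hν' : 0 < 1 - ν := by linarith
  have hs₂0 : 0 < s₂ := by positivity
  set a := min (r / 2) (min (1 - l') ((1 - ν) / 2)) with ha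
  have ha0 : 0 < a := by
    rw [ha]; refine lt_min (by positivity) (lt_min (by linarith) (by linarith))
  have ha1 : a ≤ r / 2 := min_le_left _ _
  have ha2 : a ≤ 1 - l' := (min_le_right _ _).trans (min_le_left _ _)
  have ha3 : a ≤ (1 - ν) / 2 := (min_le_right _ _).trans (min_le_right _ _)
  set C := K₀ ^ (2 * s₀) + r * M₀ ^ (2 * s₀ - ρ) + r / 4 * K₀ ^ (2 * s₀ - ρ) + C3
    + s₂ * (C4 * (ω * nι) ^ P * M2) with hC
  -- drift
  have hdrift : ∀ x : Fin (p + q) → ℝ,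
      (∫ e, Vfun p q πc g s₁ s₂ s₀ b (1 - ρ / (2 * s₀)) Nstar Nb
            (oneStep p q πc g ω αc ζ x e) ∂με) ≤
        1 + |z1 p q πc x| ^ (2 * s₀) + s₁ * Nstar (z2 p q x) ^ (2 * s₀ - ρ)
          + s₂ * Nb (xiVec p q πc g x) ^ P
          - a * ((|z1 p q πc x| ^ (2 * s₀)) ^ (1 - ρ / (2 * s₀))
              + s₁ * Nstar (z2 p q x) ^ (2 * s₀ - ρ) + s₂ * Nb (xiVec p q πc g x) ^ P) + C := by
    intro x
    set z := z1 p q πc x with hz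
    set w := Nstar (z2 p q x) with hw
    set n := Nb (xiVec p q πc g x) with hn
    set S := sigma2 p q πc g ω αc ζ x with hS
    have hw0 : 0 ≤ w := hNstar.1 _
    have hn0 : 0 ≤ n := hNb.1 _
    have hS0 : 0 ≤ S := h_sigma_nonneg p q πc g ω αc ζ x hA3
    have hSn : S ≤ ω + c * n := hσ x
    have hstep : ∀ e, Vfun p q πc g s₁ s₂ s₀ b (1 - ρ / (2 * s₀)) Nstar Nb
        (oneStep p q πc g ω αc ζ x e) ≤
        (1 + |g z| ^ (2 * s₀) + s₁ * (l' * w ^ (2 * s₀ - ρ) + C2 * |z| ^ (2 * s₀ - ρ)))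
        + (2 * s₀ * |g z| ^ (2 * s₀ - 2) * g z * √S) * e
        + (CT * (|g z| ^ (2 * s₀ - 2) * S)) * e ^ 2
        + (CT * S ^ s₀) * |e| ^ (2 * s₀)
        + (s₂ * (1 + δ2)) * Nb ((lambdaMat q αc e).mulVec (xiVec p q πc g x)) ^ P
        + (s₂ * (C4 * (ω * nι) ^ P)) * |e| ^ (2 * P) := by
      intro e
      have t1 : |z1 p q πc (oneStep p q πc g ω αc ζ x e)| ^ (2 * s₀) ≤
          |g z| ^ (2 * s₀) + (2 * s₀ * |g z| ^ (2 * s₀ - 2) * g z * √S) * e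
          + (CT * (|g z| ^ (2 * s₀ - 2) * S)) * e ^ 2 + (CT * S ^ s₀) * |e| ^ (2 * s₀) := by
        have e0 : z1 p q πc (oneStep p q πc g ω αc ζ x e) = g z + √S * e :=
          h_u_zero p q πc g ω αc ζ x e hp
        rw [e0]
        refine (h_taylor (2 * s₀) (by linarith) (g z) (√S * e)).trans (le_of_eq ?_)
        have e1 : |√S * e| ^ (2 * s₀) = S ^ s₀ * |e| ^ (2 * s₀) := by
          rw [abs_mul, Real.mul_rpow (abs_nonneg _) (abs_nonneg _), ← h_sq_rpow (√S) s₀,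
            Real.sq_sqrt hS0]
        rw [e1, mul_pow (√S) e 2, Real.sq_sqrt hS0, ← hCT]
        ring
      have t2 : Nstar (z2 p q (oneStep p q πc g ω αc ζ x e)) ^ (2 * s₀ - ρ) ≤
          l' * w ^ (2 * s₀ - ρ) + C2 * |z| ^ (2 * s₀ - ρ) := by
        have e1 : Nstar (z2 p q (oneStep p q πc g ω αc ζ x e)) ≤ l * w + |z| * cι := by
          rw [h_z2]
          refine (hNstar.2.2.2 _ _).trans ?_
          rw [hNstar.2.2.1]
          exact add_le_add (hl _) le_rfl
        have e2 := Real.rpow_le_rpow (hNstar.1 _) e1 hκ.le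
        refine e2.trans ((hsplit5 (l * w) (|z| * cι) (by positivity) (by positivity)).trans
          (le_of_eq ?_))
        rw [Real.mul_rpow hl0 hw0, Real.mul_rpow (abs_nonneg _) hcι0, hl', hC2]
        ring
      have t3 : Nb (xiVec p q πc g (oneStep p q πc g ω αc ζ x e)) ^ P ≤
          (1 + δ2) * Nb ((lambdaMat q αc e).mulVec (xiVec p q πc g x)) ^ P
          + (C4 * (ω * nι) ^ P) * |e| ^ (2 * P) := by
        have e1 := h_xi p q πc g ω αc ζ x e hp hq hA3 hNb hmon
        have e2 := Real.rpow_le_rpow (hNb.1 _) e1 hPpos.le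
        refine e2.trans ((hsplit4 _ _ (hNb.1 _) (by positivity)).trans (le_of_eq ?_))
        have e3 : ω * e ^ 2 * nι = (ω * nι) * e ^ 2 := by ring
        rw [← hnι, e3, Real.mul_rpow (by positivity) (by positivity), h_sq_rpow]
        ring
      unfold Vfun
      rw [hκeq, ← hP]
      have t2' := mul_le_mul_of_nonneg_left t2 hs₁0.le
      have t3' := mul_le_mul_of_nonneg_left t3 hs₂0.le
      linarith
    have hV0 : ∀ e, 0 ≤ Vfun p q πc g s₁ s₂ s₀ b (1 - ρ / (2 * s₀)) Nstar Nb
        (oneStep p q πc g ω αc ζ x e) := by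
      intro e
      unfold Vfun
      have e1 := Real.rpow_nonneg (hNstar.1 (z2 p q (oneStep p q πc g ω αc ζ x e)))
        (2 * s₀ * (1 - ρ / (2 * s₀)))
      have e2 := Real.rpow_nonneg (hNb.1 (xiVec p q πc g (oneStep p q πc g ω αc ζ x e))) (b * s₀)
      positivity
    have hE := h_intbound με hprob (2 * s₀) (2 * P) hI1 hmean hI2 hvar hI3 hk _ _
      (hμ (xiVec p q πc g x)).1 _ _ _ _ _ _ hV0 hstep
    have hEL := (hμ (xiVec p q πc g x)).2
    rw [← hn] at hEL
    rw [← hM1, ← hM2] at hE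
    obtain ⟨hg1, hg2⟩ := h_g hA2ii (by linarith : 2 ≤ 2 * s₀) z
    have hcr := hcross |g z| S n (abs_nonneg _) hS0 hn0 hSn
    have hSs := h_poly ω c s₀ P hω.le hc (by linarith) hsP S n hS0 hn0 hSn
    have hZα : (|z| ^ (2 * s₀)) ^ (1 - ρ / (2 * s₀)) = |z| ^ (2 * s₀ - ρ) := by
      rw [← Real.rpow_mul (abs_nonneg _), hκeq]
    rw [hZα]
    set Zκ := |z| ^ (2 * s₀ - ρ) with hZκ
    set W := w ^ (2 * s₀ - ρ) with hW
    set X := n ^ P with hX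
    have hZκ0 : 0 ≤ Zκ := by positivity
    have hW0 : 0 ≤ W := by positivity
    have hX0 : 0 ≤ X := by positivity
    have b1 : CT * (|g z| ^ (2 * s₀ - 2) * S) ≤
        r / 4 * (Zκ + K₀ ^ (2 * s₀ - ρ)) + CT * Ccr * (1 + X) := by
      have e1 : |g z| ^ (2 * s₀ - 2) * S ≤
          r / (4 * CT) * (Zκ + K₀ ^ (2 * s₀ - ρ)) + Ccr * (1 + X) :=
        hcr.trans (add_le_add (mul_le_mul_of_nonneg_left hg2 (by positivity)) le_rfl)
      refine (mul_le_mul_of_nonneg_left e1 hCT0.le).trans (le_of_eq ?_)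
      field_simp
    have b2 : CT * S ^ s₀ * M1 ≤ CT * (CS * M1) * (1 + X) := by
      have := mul_le_mul_of_nonneg_left hSs (mul_nonneg hCT0.le hM1n)
      calc _ = CT * M1 * S ^ s₀ := by ring
        _ ≤ _ := this
        _ = _ := by ring
    have b3 : s₁ * C2 ≤ r / 4 := by
      rw [hs₁, div_mul_eq_mul_div, div_le_iff₀ (by positivity)]
      have : r / 4 * (4 * (C2 + 1)) = r * C2 + r := by ring
      linarith
    have b3' := mul_le_mul_of_nonneg_right b3 hZκ0
    have b4 : s₂ * (1 + δ2) * ∫ e, Nb ((lambdaMat q αc e).mulVec (xiVec p q πc g x)) ^ P ∂με ≤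
        s₂ * ν * X := by
      refine (mul_le_mul_of_nonneg_left hEL (by positivity)).trans (le_of_eq ?_)
      rw [hν]; ring
    have b5 : C3 ≤ s₂ * ((1 - ν) / 2) := by
      have : s₂ * ((1 - ν) / 2) = C3 + (1 - ν) / 2 := by rw [hs₂]; field_simp
      linarith
    have b5' := mul_le_mul_of_nonneg_right b5 hX0
    have a1 := mul_le_mul_of_nonneg_right ha1 hZκ0
    have a2 := mul_le_mul_of_nonneg_right ha2 (mul_nonneg hs₁0.le hW0)
    have a3 := mul_le_mul_of_nonneg_right ha3 (mul_nonneg hs₂0.le hX0)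
    have c3 : CT * Ccr * (1 + X) + CT * (CS * M1) * (1 + X) = C3 + C3 * X := by
      rw [hC3]; ring
    rw [hC]
    linarith
  obtain ⟨et, het, N, hN, bt, hfin⟩ := h_assemble
    (fun x : Fin (p + q) → ℝ => |z1 p q πc x| ^ (2 * s₀))
    (fun x => Nstar (z2 p q x) ^ (2 * s₀ - ρ)) (fun x => Nb (xiVec p q πc g x) ^ P) _
    (1 - ρ / (2 * s₀)) s₁ s₂ a C (fun x => by positivity)
    (fun x => Real.rpow_nonneg (hNstar.1 _) _) (fun x => Real.rpow_nonneg (hNb.1 _) _)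
    hα0 hα1 hs₁0 hs₂0 ha0 hdrift
  refine ⟨s₁, hs₁0, s₂, hs₂0, et, het, N, hN, bt, fun x => ?_⟩
  obtain ⟨f1, f2⟩ := hfin x
  have hVx : Vfun p q πc g s₁ s₂ s₀ b (1 - ρ / (2 * s₀)) Nstar Nb x =
      1 + |z1 p q πc x| ^ (2 * s₀) + s₁ * Nstar (z2 p q x) ^ (2 * s₀ - ρ)
          + s₂ * Nb (xiVec p q πc g x) ^ P := by
    unfold Vfun; rw [hκeq]
  rw [hVx]
  have hXα : (Nb (xiVec p q πc g x) ^ P) ^ (1 - ρ / (2 * s₀)) =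
      Nb (xiVec p q πc g x) ^ (P * (1 - ρ / (2 * s₀))) := by
    rw [← Real.rpow_mul (hNb.1 _)]
  by_cases hx : |z1 p q πc x| ^ (2 * s₀) ≤ (N : ℝ) ∧
      Nstar (z2 p q x) ^ (2 * s₀ - ρ) ≤ (N : ℝ) ∧
      Nb (xiVec p q πc g x) ^ (P * (1 - ρ / (2 * s₀))) ≤ (N : ℝ)
  · rw [Set.indicator_of_mem]
    · exact f1
    · rw [Set.mem_setOf_eq, hκeq]; exact hx
  · rw [Set.indicator_of_notMem]
    · rw [add_zero]
      apply f2
      rw [hXα]; exact hx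
    · rw [Set.mem_setOf_eq, hκeq]; exact hx
end

section
/- Let γ > 0, a₁ ≤ a₂, ν₁ < 0 < ν₂, and define g(u) = u + ν₁L(u;γ,a₁) + ν₂(1−L(u;γ,a₂)) where L(u;γ,a) = 1/(1+e^{−γ(u−a)}). Then g is continuous (hence measurable and locally bounded), |g(u)| → ∞ as |u| → ∞, and there exist positive constants r, M₀ and K₀ such that |g(u)| ≤ (1−r|u|^{−1})|u| for all |u| ≥ M₀ and |g(u)| ≤ K₀ for all |u| ≤ M₀. In other words, g satisfies Assumption 2(ii) with ρ = 1. -/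
open Filter

/-- Let γ > 0, a₁ ≤ a₂, ν₁ < 0 < ν₂ and
g(u) = u + ν₁L(u;γ,a₁) + ν₂(1−L(u;γ,a₂)) with L(u;γ,a) = 1/(1+e^{−γ(u−a)}).
Then g is continuous, |g(u)| → ∞ as |u| → ∞, and g satisfies the bounds of
Assumption 2(ii) with ρ = 1. -/
theorem stmt_16 (γ a₁ a₂ ν₁ ν₂ : ℝ) (hγ : 0 < γ) (ha : a₁ ≤ a₂)
    (hν₁ : ν₁ < 0) (hν₂ : 0 < ν₂)
    (g : ℝ → ℝ)
    (hg : ∀ u : ℝ, g u =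
      u + ν₁ * (1 / (1 + Real.exp (-γ * (u - a₁))))
        + ν₂ * (1 - 1 / (1 + Real.exp (-γ * (u - a₂))))) :
    Continuous g ∧
    Tendsto (fun u : ℝ => |g u|) (cocompact ℝ) atTop ∧
    ∃ r M₀ K₀ : ℝ, 0 < r ∧ 0 < M₀ ∧ 0 < K₀ ∧
      (∀ u : ℝ, M₀ ≤ |u| → |g u| ≤ (1 - r * |u| ^ (-(1 : ℝ))) * |u|) ∧
      (∀ u : ℝ, |u| ≤ M₀ → |g u| ≤ K₀) := by
  have hpos : ∀ a u : ℝ, 0 < 1 + Real.exp (-γ * (u - a)) := fun a u => by positivity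
  have hcL : ∀ a : ℝ, Continuous (fun u : ℝ => 1 / (1 + Real.exp (-γ * (u - a)))) := by
    intro a
    refine Continuous.div continuous_const (by fun_prop) (fun u => (hpos a u).ne')
  have hL0 : ∀ a u : ℝ, 0 ≤ 1 / (1 + Real.exp (-γ * (u - a))) := fun a u => by positivity
  have hL1 : ∀ a u : ℝ, 1 / (1 + Real.exp (-γ * (u - a))) ≤ 1 := by
    intro a u
    rw [div_le_one (hpos a u)]
    linarith [Real.exp_pos (-γ * (u - a))]
  have htop : ∀ a : ℝ, Tendsto (fun u : ℝ => 1 / (1 + Real.exp (-γ * (u - a)))) atTop (nhds 1) := by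
    intro a
    have h1 : Tendsto (fun u : ℝ => -γ * (u - a)) atTop atBot :=
      (tendsto_atTop_add_const_right atTop (-a) tendsto_id).const_mul_atTop_of_neg
        (neg_lt_zero.mpr hγ)
    have h2 := (Real.tendsto_exp_atBot.comp h1).const_add 1
    have h3 := (tendsto_const_nhds (x := (1 : ℝ))).div h2 (by norm_num)
    rw [add_zero, div_one] at h3
    exact h3
  have hbot : ∀ a : ℝ, Tendsto (fun u : ℝ => 1 / (1 + Real.exp (-γ * (u - a)))) atBot (nhds 0) := by
    intro a
    have h1 : Tendsto (fun u : ℝ => -γ * (u - a)) atBot atTop :=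
      (tendsto_atBot_add_const_right atBot (-a) tendsto_id).const_mul_atBot_of_neg
        (neg_lt_zero.mpr hγ)
    have h2 := tendsto_atTop_add_const_left atTop (1 : ℝ) tendsto_id
    have h3 := (h2.comp (Real.tendsto_exp_atTop.comp h1)).inv_tendsto_atTop
    refine h3.congr (fun u => ?_)
    simp
  obtain ⟨h, hh⟩ : ∃ h : ℝ → ℝ, h = fun u => ν₁ * (1 / (1 + Real.exp (-γ * (u - a₁))))
        + ν₂ * (1 - 1 / (1 + Real.exp (-γ * (u - a₂)))) := ⟨_, rfl⟩
  have hgh : ∀ u, g u = u + h u := by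
    intro u; rw [hg, hh]; ring
  have hcont : Continuous h := by
    rw [hh]
    exact ((hcL a₁).const_mul ν₁).add ((continuous_const.sub (hcL a₂)).const_mul ν₂)
  have hlo : ∀ u, ν₁ ≤ h u := by
    intro u; rw [hh]
    nlinarith [hL0 a₁ u, hL1 a₁ u, hL0 a₂ u, hL1 a₂ u]
  have hhi : ∀ u, h u ≤ ν₂ := by
    intro u; rw [hh]
    nlinarith [hL0 a₁ u, hL1 a₁ u, hL0 a₂ u, hL1 a₂ u]
  have hhtop : Tendsto h atTop (nhds ν₁) := by
    have := ((htop a₁).const_mul ν₁).add (((htop a₂).const_sub 1).const_mul ν₂)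
    rw [hh]; simpa using this
  have hhbot : Tendsto h atBot (nhds ν₂) := by
    have := ((hbot a₁).const_mul ν₁).add (((hbot a₂).const_sub 1).const_mul ν₂)
    rw [hh]; simpa using this
  have habs : ∀ u, |h u| ≤ ν₂ - ν₁ := fun u =>
    abs_le.mpr ⟨by linarith [hlo u], by linarith [hhi u]⟩
  refine ⟨?_, ?_, ?_⟩
  · rw [funext hgh]; exact continuous_id.add hcont
  · have h1 := tendsto_atTop_add_const_right _ (-(ν₂ - ν₁)) (tendsto_norm_cocompact_atTop (E := ℝ))
    refine tendsto_atTop_mono (fun u => ?_) h1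
    have h2 := abs_sub (g u) (h u)
    rw [hgh] at h2 ⊢
    rw [add_sub_cancel_right] at h2
    rw [Real.norm_eq_abs]
    linarith [habs u]
  · obtain ⟨r, hr0, hr1, hr2⟩ : ∃ r : ℝ, 0 < r ∧ r < -ν₁ ∧ r < ν₂ := by
      have : 0 < min (-ν₁) ν₂ := lt_min (by linarith) hν₂
      obtain ⟨r, h1, h2⟩ := exists_between this
      exact ⟨r, h1, lt_of_lt_of_le h2 (min_le_left _ _), lt_of_lt_of_le h2 (min_le_right _ _)⟩
    obtain ⟨A, hA⟩ := eventually_atTop.mp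
      (hhtop.eventually (gt_mem_nhds (show ν₁ < -r by linarith)))
    obtain ⟨B, hB⟩ := eventually_atBot.mp (hhbot.eventually (lt_mem_nhds hr2))
    have hA' : A ≤ |A| := le_abs_self A
    have hB' : -|B| ≤ B := neg_abs_le B
    have hA0 := abs_nonneg A
    have hB0 := abs_nonneg B
    refine ⟨r, |A| + |B| + (ν₂ - ν₁), |A| + |B| + 2 * (ν₂ - ν₁), hr0, by linarith, by linarith,
      ?_, ?_⟩
    · intro u hu
      have hu0 : 0 < |u| := by linarith
      have e : (1 - r * |u| ^ (-(1 : ℝ))) * |u| = |u| - r := by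
        rw [Real.rpow_neg_one]; field_simp
      rw [e, hgh, abs_le]
      rcases abs_cases u with ⟨h1, h2⟩ | ⟨h1, h2⟩
      · have := hA u (by linarith)
        constructor <;> linarith [hlo u]
      · have := hB u (by linarith)
        constructor <;> linarith [hhi u]
    · intro u hu
      rw [hgh]
      linarith [abs_add_le u (h u), habs u]
end
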